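/- arXiv:1103.5873 — 2 statements merged into one kernel-verified Lean document; each statement's English description precedes it below -/
import Mathlib

section
/- Let the setting be type A_N or type B_N and let (i,k) ∈ X. Suppose p and p′ are paths in P_{i,k} such that p is weakly below p′ and p ≠ p′. Then there exists (j,ℓ) ∈ W such that p can be raised at (j,ℓ) and the raised path p𝒜_{j,ℓ} is weakly below p′. -/
namespace Paper

/-- The ambient setting: type `A N` (with `N ≥ 1`) or type `B N ε`
(with `N ≥ 2` and `0 < ε < 1/2`). -/
inductive Setting where
  | A (N : ℕ)
  | B (N : ℕ) (ε : ℝ)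

namespace Setting

/-- The rank `N`. -/
def N : Setting → ℕ
  | A n => n
  | B n _ => n

/-- Validity of the parameters of the setting. -/
def valid : Setting → Prop
  | A n => 1 ≤ n
  | B n ε => 2 ≤ n ∧ 0 < ε ∧ ε < 1 / 2

end Setting

/-- The numbers `r_i` : in type A all equal `1`; in type B, `r_N = 1` and `r_i = 2` for `i < N`. -/
def rr : Setting → ℕ → ℕ
  | .A _, _ => 1
  | .B n _, j => if j = n then 1 else 2

/-- The set `X` in type `A_N`. -/
def XA (n : ℕ) : Set (ℕ × ℤ) :=
  {ik | 1 ≤ ik.1 ∧ ik.1 ≤ n ∧ ((ik.1 : ℤ) - ik.2) % 2 = 1}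

/-- The set `X` in type `B_N`. -/
def XB (n : ℕ) : Set (ℕ × ℤ) :=
  {ik | (ik.1 = n ∧ ik.2 % 2 = 1) ∨ (1 ≤ ik.1 ∧ ik.1 < n ∧ ik.2 % 2 = 0)}

/-- The set `X ⊆ I × ℤ`. -/
def X : Setting → Set (ℕ × ℤ)
  | .A n => XA n
  | .B n _ => XB n

/-- The set `W = {(i,k) : (i, k - r_i) ∈ X}`. -/
def W (S : Setting) : Set (ℕ × ℤ) :=
  {ik | (ik.1, ik.2 - (rr S ik.1 : ℤ)) ∈ X S}

/-- The `r`-th point of a path (a finite list of points of the plane). -/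
def pt (p : List (ℝ × ℝ)) (r : ℕ) : ℝ × ℝ := p.getD r (0, 0)

/-- The set of paths `𝒫_{i,k}` in type `A_N`. -/
def pathsA (n : ℕ) (i : ℕ) (k : ℤ) : Set (List (ℝ × ℝ)) :=
  {p | p.length = n + 2 ∧
    (∀ r, r < n + 2 → (pt p r).1 = (r : ℝ)) ∧
    (pt p 0).2 = (i : ℝ) + (k : ℝ) ∧
    (pt p (n + 1)).2 = (n : ℝ) + 1 - (i : ℝ) + (k : ℝ) ∧
    (∀ r, r ≤ n → (pt p (r + 1)).2 - (pt p r).2 = 1 ∨ (pt p (r + 1)).2 - (pt p r).2 = -1)}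

/-- The set of paths `𝒫_{N,ℓ}` in type `B_N`. -/
def pathsBspin (n : ℕ) (ε : ℝ) (l : ℤ) : Set (List (ℝ × ℝ)) :=
  {p | p.length = n + 1 ∧
    (if l % 4 = 3 then ∀ r, r < n → (pt p r).1 = 2 * (r : ℝ)
     else ∀ r, r < n → (pt p r).1 = 4 * (n : ℝ) - 2 - 2 * (r : ℝ)) ∧
    (pt p n).1 = 2 * (n : ℝ) - 1 ∧
    (pt p 0).2 = (l : ℝ) + 2 * (n : ℝ) - 1 ∧
    (∀ r, r + 2 ≤ n → (pt p (r + 1)).2 - (pt p r).2 = 2 ∨ (pt p (r + 1)).2 - (pt p r).2 = -2) ∧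
    ((pt p n).2 - (pt p (n - 1)).2 = 1 + ε ∨ (pt p n).2 - (pt p (n - 1)).2 = -(1 + ε))}

/-- The set of paths `𝒫_{i,k}` in type `B_N`. -/
def pathsB (n : ℕ) (ε : ℝ) (i : ℕ) (k : ℤ) : Set (List (ℝ × ℝ)) :=
  if i = n then pathsBspin n ε k
  else {p | ∃ a b : List (ℝ × ℝ),
    a ∈ pathsBspin n ε (k - (2 * (n : ℤ) - 2 * (i : ℤ) - 1)) ∧
    b ∈ pathsBspin n ε (k + (2 * (n : ℤ) - 2 * (i : ℤ) - 1)) ∧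
    p = a ++ b.reverse ∧
    (pt a n).1 = (pt b n).1 ∧ 0 < (pt a n).2 - (pt b n).2}

/-- The set of paths `𝒫_{i,k}`. -/
def P : Setting → ℕ → ℤ → Set (List (ℝ × ℝ))
  | .A n => pathsA n
  | .B n ε => pathsB n ε

/-- The map `ι : X → ℤ × ℤ` of type `B_N`. -/
def iotaB (n : ℕ) (ik : ℕ × ℤ) : ℤ × ℤ :=
  if ik.1 = n then (2 * (n : ℤ) - 1, ik.2)
  else if (2 * (n : ℤ) + ik.2 - 2 * (ik.1 : ℤ)) % 4 = 2 then (2 * (ik.1 : ℤ), ik.2)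
  else (4 * (n : ℤ) - 2 - 2 * (ik.1 : ℤ), ik.2)

/-- The corners of a path: `Cp S p true` is the set `C_{p,+}` of upper corners, and
`Cp S p false` is the set `C_{p,-}` of lower corners. -/
def Cp (S : Setting) (p : List (ℝ × ℝ)) (up : Bool) : Set (ℕ × ℤ) :=
  match S with
  | .A n =>
    {jl | 1 ≤ jl.1 ∧ jl.1 ≤ n ∧
      pt p jl.1 = ((jl.1 : ℝ), (jl.2 : ℝ)) ∧
      (pt p (jl.1 - 1)).2 = (jl.2 : ℝ) + (if up then 1 else -1) ∧
      (pt p (jl.1 + 1)).2 = (jl.2 : ℝ) + (if up then 1 else -1)}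
  | .B n ε =>
    {jl | jl ∈ XB n ∧
      ((∃ r : ℕ, 1 ≤ r ∧ r + 1 < p.length ∧
          pt p r = (((iotaB n jl).1 : ℝ), ((iotaB n jl).2 : ℝ)) ∧
          (iotaB n jl).1 ≠ 0 ∧ (iotaB n jl).1 ≠ 2 * (n : ℤ) - 1 ∧
          (iotaB n jl).1 ≠ 4 * (n : ℤ) - 2 ∧
          (if up then (pt p r).2 < (pt p (r - 1)).2 ∧ (pt p r).2 < (pt p (r + 1)).2
           else (pt p (r - 1)).2 < (pt p r).2 ∧ (pt p (r + 1)).2 < (pt p r).2))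
       ∨ (jl.1 = n ∧
          (if up then (2 * (n : ℝ) - 1, (jl.2 : ℝ) - ε) ∈ p ∧ (2 * (n : ℝ) - 1, (jl.2 : ℝ) + ε) ∉ p
           else (2 * (n : ℝ) - 1, (jl.2 : ℝ) + ε) ∈ p ∧ (2 * (n : ℝ) - 1, (jl.2 : ℝ) - ε) ∉ p)))}

/-- `p'` is obtained from `p` by replacing the point `q` by the point `q'`. -/
def Replace1 (p p' : List (ℝ × ℝ)) (q q' : ℝ × ℝ) : Prop :=
  ∃ r : ℕ, r < p.length ∧ pt p r = q ∧ p'.length = p.length ∧ pt p' r = q' ∧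
    ∀ s, s < p.length → s ≠ r → pt p' s = pt p s

/-- `p'` is obtained from `p` by replacing the point `q1` by `q1'` and the point `q2` by `q2'`. -/
def Replace2 (p p' : List (ℝ × ℝ)) (q1 q1' q2 q2' : ℝ × ℝ) : Prop :=
  ∃ r s : ℕ, r < p.length ∧ s < p.length ∧ r ≠ s ∧ pt p r = q1 ∧ pt p s = q2 ∧
    p'.length = p.length ∧ pt p' r = q1' ∧ pt p' s = q2' ∧
    ∀ u, u < p.length → u ≠ r → u ≠ s → pt p' u = pt p u

/-- The path `p` can be lowered at `(j, l)`: `(j, l - r_j) ∈ C_{p,+}` and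
`(j, l + r_j) ∉ C_{p,+}`. -/
def CanLower (S : Setting) (p : List (ℝ × ℝ)) (j : ℕ) (l : ℤ) : Prop :=
  (j, l - (rr S j : ℤ)) ∈ Cp S p true ∧ (j, l + (rr S j : ℤ)) ∉ Cp S p true

/-- `p'` is the result of the lowering move at `(j,l)` applied to the path `p ∈ 𝒫_{i,k}`;
written `p' = p 𝒜_{j,l}⁻¹`. -/
def LoweredTo (S : Setting) (i : ℕ) (k : ℤ) (j : ℕ) (l : ℤ)
    (p p' : List (ℝ × ℝ)) : Prop :=
  p ∈ P S i k ∧ p' ∈ P S i k ∧ CanLower S p j l ∧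
  (match S with
   | .A _ => Replace1 p p' ((j : ℝ), (l : ℝ) - 1) ((j : ℝ), (l : ℝ) + 1)
   | .B n ε =>
     if j = n then
       Replace1 p p' (2 * (n : ℝ) - 1, (l : ℝ) - 1 - ε) (2 * (n : ℝ) - 1, (l : ℝ) + 1 + ε)
     else if j = n - 1 then
       Replace2 p p'
         (((iotaB n (j, l - 2)).1 : ℝ), (l : ℝ) - 2) (((iotaB n (j, l - 2)).1 : ℝ), (l : ℝ) + 2)
         (2 * (n : ℝ) - 1, (l : ℝ) - 1 + ε) (2 * (n : ℝ) - 1, (l : ℝ) + 1 - ε)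
     else
       Replace1 p p'
         (((iotaB n (j, l - 2)).1 : ℝ), (l : ℝ) - 2) (((iotaB n (j, l - 2)).1 : ℝ), (l : ℝ) + 2))

/-- The path `p` can be raised at `(j,l)`: it is of the form `p' 𝒜_{j,l}⁻¹`. -/
def CanRaise (S : Setting) (i : ℕ) (k : ℤ) (p : List (ℝ × ℝ)) (j : ℕ) (l : ℤ) : Prop :=
  ∃ p', LoweredTo S i k j l p' p

/-- The monomial group `ℳ`, realised as exponent functions: the free abelian group on the
symbols `Y_{i,k}`, `(i,k) ∈ X`, is identified with finitely supported functions `(ℕ × ℤ) → ℤ`,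
written additively. -/
def Y (x : ℕ × ℤ) : (ℕ × ℤ) → ℤ := fun z => if z = x then 1 else 0

noncomputable def ind (s : Prop) : ℤ := @ite ℤ s (Classical.propDecidable s) 1 0

/-- The monomial `m(p)` of a path: `∏ Y_{j,l}` over upper corners times `∏ Y_{j,l}⁻¹`
over lower corners. -/
noncomputable def mon (S : Setting) (p : List (ℝ × ℝ)) : (ℕ × ℤ) → ℤ :=
  fun x => ind (x ∈ Cp S p true) - ind (x ∈ Cp S p false)

/-- The monomials `A_{j,l}`, with the conventions `Y_{0,·} = Y_{N+1,·} = 1`. -/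
def Amon (S : Setting) (j : ℕ) (l : ℤ) : (ℕ × ℤ) → ℤ :=
  match S with
  | .A n =>
      Y (j, l + 1) + Y (j, l - 1) - (if j = 1 then 0 else Y (j - 1, l))
        - (if j = n then 0 else Y (j + 1, l))
  | .B n _ =>
      if j = n then Y (n, l + 1) + Y (n, l - 1) - Y (n - 1, l)
      else if j = n - 1 then
        Y (n - 1, l + 2) + Y (n - 1, l - 2) - (if j = 1 then 0 else Y (n - 2, l))
          - Y (n, l + 1) - Y (n, l - 1)
      else
        Y (j, l + 2) + Y (j, l - 2) - (if j = 1 then 0 else Y (j - 1, l)) - Y (j + 1, l)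

/-- A monomial is dominant iff all its exponents are nonnegative. -/
def Dominant (m : (ℕ × ℤ) → ℤ) : Prop := ∀ x, 0 ≤ m x

/-- A monomial is anti-dominant iff all its exponents are nonpositive. -/
def AntiDominant (m : (ℕ × ℤ) → ℤ) : Prop := ∀ x, m x ≤ 0

/-- `(i',k')` is in snake position with respect to `(i,k)`. -/
def SnakePos : Setting → ℕ × ℤ → ℕ × ℤ → Prop
  | .A _, ik, ik' => |(ik'.1 : ℤ) - (ik.1 : ℤ)| + 2 ≤ ik'.2 - ik.2
  | .B n _, ik, ik' =>
      if ik.1 = n ∧ ik'.1 = n then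
        2 ≤ ik'.2 - ik.2 ∧ (ik'.2 - ik.2) % 4 = 2
      else if ik.1 = n ∨ ik'.1 = n then
        2 * |(ik'.1 : ℤ) - (ik.1 : ℤ)| + 3 ≤ ik'.2 - ik.2 ∧
          (ik'.2 - ik.2) % 4 = (2 * |(ik'.1 : ℤ) - (ik.1 : ℤ)| - 1) % 4
      else
        2 * |(ik'.1 : ℤ) - (ik.1 : ℤ)| + 4 ≤ ik'.2 - ik.2 ∧
          (ik'.2 - ik.2) % 4 = (2 * |(ik'.1 : ℤ) - (ik.1 : ℤ)|) % 4

/-- A snake: a sequence of points of `X`, each in snake position w.r.t. the previous one. -/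
def IsSnake (S : Setting) {T : ℕ} (w : Fin T → ℕ × ℤ) : Prop :=
  (∀ t, w t ∈ X S) ∧
  ∀ (t : Fin T) (h : (t : ℕ) + 1 < T), SnakePos S (w t) (w ⟨(t : ℕ) + 1, h⟩)

/-- `p` is strictly above `p'`. -/
def StrictlyAbove (p p' : List (ℝ × ℝ)) : Prop :=
  ∀ a ∈ p, ∀ b ∈ p', a.1 = b.1 → a.2 < b.2

/-- A tuple of paths is non-overlapping. -/
def NonOverlapping {T : ℕ} (ps : Fin T → List (ℝ × ℝ)) : Prop :=
  ∀ s t : Fin T, s < t → StrictlyAbove (ps s) (ps t)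

/-- The set `𝒫̄` of non-overlapping tuples of paths attached to a snake. -/
def PBar (S : Setting) {T : ℕ} (w : Fin T → ℕ × ℤ) : Set (Fin T → List (ℝ × ℝ)) :=
  {ps | (∀ t, ps t ∈ P S (w t).1 (w t).2) ∧ NonOverlapping ps}

/-- The product `∏_t m(p_t)` of the monomials of a tuple of paths. -/
noncomputable def tmon (S : Setting) {T : ℕ} (ps : Fin T → List (ℝ × ℝ)) : (ℕ × ℤ) → ℤ :=
  ∑ t, mon S (ps t)

/-- Lowering move at `jl` on a tuple of paths: one component is lowered, the others
are unchanged. -/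
def TLoweredTo (S : Setting) {T : ℕ} (w : Fin T → ℕ × ℤ) (jl : ℕ × ℤ)
    (ps ps' : Fin T → List (ℝ × ℝ)) : Prop :=
  ∃ t, LoweredTo S (w t).1 (w t).2 jl.1 jl.2 (ps t) (ps' t) ∧ ∀ s, s ≠ t → ps' s = ps s

/-- Sequences of raising/lowering moves on a single path; the list records, for each move,
whether it was a lowering move (`true`) or a raising move (`false`), and its site. -/
inductive MoveSeq (S : Setting) (i : ℕ) (k : ℤ) :
    List (ℝ × ℝ) → List (ℝ × ℝ) → List (Bool × (ℕ × ℤ)) → Prop where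
  | nil (p : List (ℝ × ℝ)) : MoveSeq S i k p p []
  | lower {p q r : List (ℝ × ℝ)} {jl : ℕ × ℤ} {ms : List (Bool × (ℕ × ℤ))} :
      jl ∈ W S → LoweredTo S i k jl.1 jl.2 p q → MoveSeq S i k q r ms →
      MoveSeq S i k p r ((true, jl) :: ms)
  | raise {p q r : List (ℝ × ℝ)} {jl : ℕ × ℤ} {ms : List (Bool × (ℕ × ℤ))} :
      jl ∈ W S → LoweredTo S i k jl.1 jl.2 q p → MoveSeq S i k q r ms →
      MoveSeq S i k p r ((false, jl) :: ms)

/-- Sequences of raising/lowering moves on tuples of paths, all of whose intermediate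
tuples are non-overlapping. -/
inductive TMoveSeq (S : Setting) {T : ℕ} (w : Fin T → ℕ × ℤ) :
    (Fin T → List (ℝ × ℝ)) → (Fin T → List (ℝ × ℝ)) → List (Bool × (ℕ × ℤ)) → Prop where
  | nil (ps : Fin T → List (ℝ × ℝ)) : TMoveSeq S w ps ps []
  | lower {ps qs rs : Fin T → List (ℝ × ℝ)} {jl : ℕ × ℤ} {ms : List (Bool × (ℕ × ℤ))} :
      jl ∈ W S → TLoweredTo S w jl ps qs → NonOverlapping qs →
      TMoveSeq S w qs rs ms → TMoveSeq S w ps rs ((true, jl) :: ms)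
  | raise {ps qs rs : Fin T → List (ℝ × ℝ)} {jl : ℕ × ℤ} {ms : List (Bool × (ℕ × ℤ))} :
      jl ∈ W S → TLoweredTo S w jl qs ps → NonOverlapping qs →
      TMoveSeq S w qs rs ms → TMoveSeq S w ps rs ((false, jl) :: ms)

/-- Sequences of lowering moves on tuples of paths, all of whose intermediate tuples
are non-overlapping; the list records the sites, in order. -/
inductive TLowerSeq (S : Setting) {T : ℕ} (w : Fin T → ℕ × ℤ) :
    (Fin T → List (ℝ × ℝ)) → (Fin T → List (ℝ × ℝ)) → List (ℕ × ℤ) → Prop where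
  | nil (ps : Fin T → List (ℝ × ℝ)) : TLowerSeq S w ps ps []
  | cons {ps qs rs : Fin T → List (ℝ × ℝ)} {jl : ℕ × ℤ} {ms : List (ℕ × ℤ)} :
      jl ∈ W S → TLoweredTo S w jl ps qs → NonOverlapping qs →
      TLowerSeq S w qs rs ms → TLowerSeq S w ps rs (jl :: ms)

/-- Weak order on paths with the same x-coordinates: `p` is weakly above `p'`. -/
def WeaklyAbove (p p' : List (ℝ × ℝ)) : Prop :=
  p.length = p'.length ∧ ∀ r, r < p.length → (pt p r).2 ≤ (pt p' r).2

/-- `p` is weakly below `p'`. -/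
def WeaklyBelow (p p' : List (ℝ × ℝ)) : Prop :=
  p.length = p'.length ∧ ∀ r, r < p.length → (pt p' r).2 ≤ (pt p r).2

/-- The path `top(p, p')`. -/
def topPath (p p' : List (ℝ × ℝ)) : List (ℝ × ℝ) :=
  List.zipWith (fun a b => (a.1, min a.2 b.2)) p p'

/-- The distinguished point contained in the highest path `p⁺_{i,k}`. -/
def highPoint : Setting → ℕ → ℤ → ℝ × ℝ
  | .A _, i, k => ((i : ℝ), (k : ℝ))
  | .B n ε, i, k =>
      if i = n then (2 * (n : ℝ) - 1, (k : ℝ) - ε)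
      else (((iotaB n (i, k)).1 : ℝ), ((iotaB n (i, k)).2 : ℝ))

/-- The distinguished point contained in the lowest path `p⁻_{i,k}`. -/
def lowPoint : Setting → ℕ → ℤ → ℝ × ℝ
  | .A n, i, k => ((n : ℝ) + 1 - (i : ℝ), (k : ℝ) + (n : ℝ) + 1)
  | .B n ε, i, k =>
      if i = n then (2 * (n : ℝ) - 1, (k : ℝ) + 4 * (n : ℝ) - 2 + ε)
      else (((iotaB n (i, k + 4 * (n : ℤ) - 2)).1 : ℝ),
            ((iotaB n (i, k + 4 * (n : ℤ) - 2)).2 : ℝ))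

/-- The highest path `p⁺_{i,k}` : the path of `𝒫_{i,k}` with no lower corners. -/
noncomputable def highestPath (S : Setting) (i : ℕ) (k : ℤ) : List (ℝ × ℝ) :=
  Classical.epsilon fun p => p ∈ P S i k ∧ Cp S p false = ∅

/-- The lowest path `p⁻_{i,k}` : the path of `𝒫_{i,k}` with no upper corners. -/
noncomputable def lowestPath (S : Setting) (i : ℕ) (k : ℤ) : List (ℝ × ℝ) :=
  Classical.epsilon fun p => p ∈ P S i k ∧ Cp S p true = ∅


theorem pt_set (p : List (ℝ × ℝ)) (r s : ℕ) (x : ℝ × ℝ) (h : r < p.length) :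
    pt (p.set r x) s = if s = r then x else pt p s := by
  unfold pt
  simp only [List.getD_eq_getElem?_getD, List.getElem?_set]
  by_cases h1 : r = s
  · subst h1; simp [h]
  · simp [h1, Ne.symm h1]

theorem pt_append_left (a b : List (ℝ × ℝ)) (r : ℕ) (h : r < a.length) :
    pt (a ++ b) r = pt a r := by
  unfold pt
  simp only [List.getD_eq_getElem?_getD, List.getElem?_append_left h]

theorem pt_append_rev (a b : List (ℝ × ℝ)) (n r : ℕ) (ha : a.length = n + 1)
    (hb : b.length = n + 1) (h : r ≤ n) :
    pt (a ++ b.reverse) (2 * n + 1 - r) = pt b r := by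
  unfold pt
  simp only [List.getD_eq_getElem?_getD]
  rw [List.getElem?_append_right (by omega), List.getElem?_reverse (by omega)]
  congr 2
  omega

theorem pt_ext (p q : List (ℝ × ℝ)) (h : p.length = q.length)
    (h2 : ∀ r, r < p.length → pt p r = pt q r) : p = q := by
  apply List.ext_getElem h
  intro r h3 h4
  have := h2 r h3
  simpa [pt, List.getD_eq_getElem?_getD, h3, h4] using this

theorem mem_pt (p : List (ℝ × ℝ)) (x : ℝ × ℝ) : x ∈ p ↔ ∃ r, r < p.length ∧ pt p r = x := by
  rw [List.mem_iff_getElem]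
  constructor
  · rintro ⟨r, h, rfl⟩
    exact ⟨r, h, by simp [pt, List.getD_eq_getElem?_getD, h]⟩
  · rintro ⟨r, h, rfl⟩
    exact ⟨r, h, by simp [pt, List.getD_eq_getElem?_getD, h]⟩

theorem exists_max (f g : ℕ → ℝ) (L : ℕ) (h : ∃ r, r < L ∧ g r < f r) :
    ∃ r, r < L ∧ g r < f r ∧ ∀ s, s < L → g s < f s → f s ≤ f r := by
  classical
  obtain ⟨r0, h1, h2⟩ := h
  obtain ⟨r, hr, hm⟩ := Finset.exists_max_image ((Finset.range L).filter fun r => g r < f r) f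
    ⟨r0, by simp [h1, h2]⟩
  simp only [Finset.mem_filter, Finset.mem_range] at hr hm
  exact ⟨r, hr.1, hr.2, fun s a b => hm s ⟨a, b⟩⟩

theorem exists_lt (p p' : List (ℝ × ℝ)) (hx : ∀ r, r < p.length → (pt p r).1 = (pt p' r).1)
    (hwb : WeaklyBelow p p') (hne : p ≠ p') :
    ∃ r, r < p.length ∧ (pt p' r).2 < (pt p r).2 := by
  by_contra hc
  push Not at hc
  apply hne
  apply pt_ext p p' hwb.1
  intro r hr
  exact Prod.ext (hx r hr) (le_antisymm (hc r hr) (hwb.2 r hr))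

theorem heightsA (n i : ℕ) (k : ℤ) (p : List (ℝ × ℝ)) (hp : p ∈ pathsA n i k) (r : ℕ)
    (hr : r ≤ n + 1) : ∃ z : ℤ, (pt p r).2 = z ∧ (z - i - k - r) % 2 = 0 := by
  obtain ⟨_, _, h0, _, hs⟩ := hp
  induction r with
  | zero => exact ⟨i + k, by rw [h0]; push_cast; ring, by simp⟩
  | succ r ih =>
    obtain ⟨z, hz, hz2⟩ := ih (by omega)
    rcases hs r (by omega) with h | h
    · exact ⟨z + 1, by push_cast; linarith, by push_cast; omega⟩
    · exact ⟨z - 1, by push_cast; linarith, by push_cast; omega⟩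

theorem stmtA (n : ℕ) (i : ℕ) (k : ℤ) (hik : (i, k) ∈ XA n)
    (p p' : List (ℝ × ℝ)) (hp : p ∈ pathsA n i k) (hp' : p' ∈ pathsA n i k)
    (hwb : WeaklyBelow p p') (hne : p ≠ p') :
    ∃ jl ∈ W (.A n), ∃ q : List (ℝ × ℝ),
      LoweredTo (.A n) i k jl.1 jl.2 q p ∧ WeaklyBelow q p' := by
  have Hp := hp
  have Hp' := hp'
  obtain ⟨hl, hx, h0, hN, hs⟩ := hp
  obtain ⟨hl', hx', h0', hN', hs'⟩ := hp'
  obtain ⟨r, hr, hlt, hmax⟩ := exists_max (fun r => (pt p r).2) (fun r => (pt p' r).2) p.length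
    (exists_lt p p' (fun r hr => by rw [hx r (by omega), hx' r (by omega)]) hwb hne)
  have hr0 : r ≠ 0 := by rintro rfl; linarith
  have hrn : r ≠ n + 1 := by rintro rfl; linarith
  obtain ⟨t, rfl⟩ : ∃ t, r = t + 1 := ⟨r - 1, by omega⟩
  have e1 : (pt p t).2 = (pt p (t+1)).2 - 1 := by
    rcases hs t (by omega) with h | h
    · linarith
    · have := hmax t (by omega) (by rcases hs' t (by omega) with h' | h' <;> linarith)
      linarith
  have e2 : (pt p (t+2)).2 = (pt p (t+1)).2 - 1 := by
    rcases hs (t+1) (by omega) with h | h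
    · have := hmax (t+2) (by omega) (by rcases hs' (t+1) (by omega) with h' | h' <;> linarith)
      linarith
    · linarith
  obtain ⟨z, hz, hz2⟩ := heightsA n i k p Hp (t+1) (by omega)
  obtain ⟨z', hz', hz2'⟩ := heightsA n i k p' Hp' (t+1) (by omega)
  have hzz : z' + 2 ≤ z := by
    have : z' < z := by rw [hz, hz'] at hlt; exact_mod_cast hlt
    omega
  have hzzR : (z':ℝ) + 2 ≤ z := by exact_mod_cast hzz
  obtain ⟨_, _, hi3⟩ := hik
  simp only at hi3
  have hQ : ∀ s, pt (p.set (t+1) (((t+1:ℕ):ℝ), (z:ℝ) - 2)) s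
      = if s = t+1 then (((t+1:ℕ):ℝ), (z:ℝ) - 2) else pt p s :=
    fun s => pt_set _ _ _ _ hr
  have hQl : (p.set (t+1) (((t+1:ℕ):ℝ), (z:ℝ) - 2)).length = p.length := by simp
  generalize p.set (t+1) (((t+1:ℕ):ℝ), (z:ℝ) - 2) = q at hQ hQl
  refine ⟨(t+1, z-1), ?_, q, ⟨?_, Hp, ⟨?_, ?_⟩, ?_⟩, ?_⟩
  · simp only [W, X, XA, rr, Set.mem_ofPred_eq]
    refine ⟨by omega, by omega, ?_⟩
    push_cast at hz2 ⊢
    omega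
  · refine ⟨by omega, ?_, ?_, ?_, ?_⟩
    · intro s hs1
      rw [hQ]; split_ifs with h
      · simp [h]
      · exact hx s hs1
    · rw [hQ, if_neg (by omega)]; exact h0
    · rw [hQ, if_neg (by omega)]; exact hN
    · intro s hs1
      rw [hQ, hQ]
      by_cases h1 : s = t
      · subst h1; simp; right; linarith
      · by_cases h2 : s = t + 1
        · subst h2; simp; left; linarith
        · rw [if_neg (by omega), if_neg h2]; exact hs s hs1
  · simp only [Cp, rr, Set.mem_ofPred_eq]
    refine ⟨by omega, by omega, ?_, ?_, ?_⟩
    · rw [hQ, if_pos rfl]; ext <;> simp; ring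
    · rw [hQ, if_neg (by omega)]; simp; linarith
    · rw [hQ, if_neg (by omega)]; simp; linarith
  · simp only [Cp, rr, Set.mem_ofPred_eq]
    rintro ⟨_, _, h, _⟩
    rw [hQ, if_pos rfl] at h
    have := congrArg Prod.snd h
    simp at this
  · refine ⟨t+1, by omega, ?_, hQl.symm, ?_, ?_⟩
    · rw [hQ, if_pos rfl]; ext <;> simp; ring
    · ext
      · simpa using hx (t+1) (by omega)
      · simp; linarith
    · intro s _ h; rw [hQ, if_neg h]
  · refine ⟨by omega, fun s hs1 => ?_⟩
    rw [hQ]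
    split_ifs with h
    · subst h; simp; linarith
    · exact hwb.2 s (by omega)

theorem heightsB (n : ℕ) (ε : ℝ) (l : ℤ) (p : List (ℝ × ℝ)) (hp : p ∈ pathsBspin n ε l) (r : ℕ)
    (hr : r < n) : ∃ z : ℤ, (pt p r).2 = z ∧ (z - (l + 2 * n - 1 + 2 * r)) % 4 = 0 := by
  obtain ⟨_, _, _, h0, hs, _⟩ := hp
  induction r with
  | zero => exact ⟨l + 2 * n - 1, by rw [h0]; push_cast; ring, by simp⟩
  | succ r ih =>
    obtain ⟨z, hz, hz2⟩ := ih (by omega)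
    rcases hs r (by omega) with h | h
    · exact ⟨z + 2, by push_cast; linarith, by push_cast; omega⟩
    · exact ⟨z - 2, by push_cast; linarith, by push_cast; omega⟩

/-- `a` is obtained from `q` by lowering at `(j,m)`. -/
structure SpinRaise (n : ℕ) (ε : ℝ) (l : ℤ) (q a : List (ℝ × ℝ)) (j : ℕ) (m : ℤ) : Prop where
  mem : q ∈ pathsBspin n ε l
  j1 : 1 ≤ j
  jn : j ≤ n
  even : m % 2 = 0
  low : j < n → pt q j = (((iotaB n (j, m - 2)).1 : ℝ), (m : ℝ) - 2) ∧
    pt a j = (((iotaB n (j, m - 2)).1 : ℝ), (m : ℝ) + 2) ∧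
    (m : ℝ) - 2 < (pt q (j - 1)).2 ∧ (m : ℝ) - 2 < (pt q (j + 1)).2
  lowlast : j + 1 = n → pt q n = (2 * (n : ℝ) - 1, (m : ℝ) - 1 + ε) ∧
    pt a n = (2 * (n : ℝ) - 1, (m : ℝ) + 1 - ε)
  last : j = n → pt q n = (2 * (n : ℝ) - 1, (m : ℝ) - 1 - ε) ∧
    pt a n = (2 * (n : ℝ) - 1, (m : ℝ) + 1 + ε)
  other : ∀ s, s ≤ n → s ≠ j → ¬ (j + 1 = n ∧ s = n) → pt q s = pt a s

theorem spin_x (n : ℕ) (ε : ℝ) (l : ℤ) (a : List (ℝ × ℝ)) (ha : a ∈ pathsBspin n ε l)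
    (r : ℕ) (hr : r < n) : (pt a r).1 = if l % 4 = 3 then 2 * (r:ℝ) else 4 * (n:ℝ) - 2 - 2 * r := by
  obtain ⟨_, hx, _⟩ := ha
  split_ifs at hx ⊢ <;> exact hx r hr

theorem spin_xx (n : ℕ) (ε : ℝ) (l : ℤ) (a a' : List (ℝ × ℝ)) (ha : a ∈ pathsBspin n ε l)
    (ha' : a' ∈ pathsBspin n ε l)
    (r : ℕ) (hr : r < n + 1) : (pt a r).1 = (pt a' r).1 := by
  by_cases h : r = n
  · subst h; rw [ha.2.2.1, ha'.2.2.1]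
  · rw [spin_x n ε l a ha r (by omega), spin_x n ε l a' ha' r (by omega)]

theorem iota_eq (n : ℕ) (l : ℤ) (r : ℕ) (z : ℤ) (hr : r < n) (hl : l % 2 = 1)
    (hz : (z - (l + 2 * n - 1 + 2 * r)) % 4 = 0) :
    ((iotaB n (r, z)).1 : ℝ) = if l % 4 = 3 then 2 * (r:ℝ) else 4 * (n:ℝ) - 2 - 2 * r := by
  unfold iotaB
  simp only [if_neg (by omega : ¬ r = n)]
  by_cases h : l % 4 = 3
  · rw [if_pos (by omega), if_pos h]; push_cast; ring
  · rw [if_neg (by omega), if_neg h]; push_cast; ring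

theorem spin_lemma (n : ℕ) (ε : ℝ) (l : ℤ) (hn : 2 ≤ n) (he : 0 < ε) (he2 : ε < 1 / 2)
    (hlo : l % 2 = 1) (a a' : List (ℝ × ℝ)) (ha : a ∈ pathsBspin n ε l)
    (ha' : a' ∈ pathsBspin n ε l) (hwb : WeaklyBelow a a') (hne : a ≠ a') :
    ∃ q j m, SpinRaise n ε l q a j m ∧ WeaklyBelow q a' := by
  have Ha := ha
  have Ha' := ha'
  obtain ⟨hl, hx, hxn, h0, hs, hN⟩ := ha
  obtain ⟨hl', hx', hxn', h0', hs', hN'⟩ := ha'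
  obtain ⟨r, hr, hlt, hmax⟩ := exists_max (fun r => (pt a r).2) (fun r => (pt a' r).2) a.length
    (exists_lt a a' (fun r hr => spin_xx n ε l a a' Ha Ha' r (by omega)) hwb hne)
  have hr0 : r ≠ 0 := by rintro rfl; linarith
  obtain ⟨N, rfl⟩ : ∃ N, n = N + 2 := ⟨n - 2, by omega⟩
  simp only [show N + 2 - 1 = N + 1 by omega] at hN hN'
  obtain ⟨t, rfl⟩ : ∃ t, r = t + 1 := ⟨r - 1, by omega⟩
  by_cases hrn : t + 1 = N + 2
  · -- last
    obtain rfl : t = N + 1 := by omega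
    have e1 : (pt a (N+2)).2 - (pt a (N+1)).2 = 1 + ε := by
      rcases hN with h | h
      · exact h
      · have := hmax (N+1) (by omega) (by rcases hN' with h' | h' <;> linarith)
        linarith
    obtain ⟨z, hz, hz2⟩ := heightsB _ ε l a Ha (N+1) (by omega)
    obtain ⟨z', hz', hz2'⟩ := heightsB _ ε l a' Ha' (N+1) (by omega)
    have hle := hwb.2 (N+1) (by omega)
    have hle2 : z' ≤ z := by rw [hz, hz'] at hle; exact_mod_cast hle
    have hb : (pt a' (N+2)).2 ≤ z - 1 - ε := by
      by_cases hc : z' = z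
      · subst hc
        rcases hN' with h | h <;> linarith
      · have : z' + 4 ≤ z := by omega
        have : (z':ℝ) + 4 ≤ z := by exact_mod_cast this
        rcases hN' with h | h <;> linarith
    have hQ : ∀ s, pt (a.set (N+2) (2 * ((N+2:ℕ):ℝ) - 1, (z:ℝ) - 1 - ε)) s
      = if s = N+2 then (2 * ((N+2:ℕ):ℝ) - 1, (z:ℝ) - 1 - ε) else pt a s :=
      fun s => pt_set _ _ _ _ hr
    have hQl : (a.set (N+2) (2 * ((N+2:ℕ):ℝ) - 1, (z:ℝ) - 1 - ε)).length = a.length := by simp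
    generalize a.set (N+2) (2 * ((N+2:ℕ):ℝ) - 1, (z:ℝ) - 1 - ε) = q at hQ hQl
    refine ⟨q, N+2, z, ⟨⟨?_, ?_, ?_, ?_, ?_, ?_⟩, by omega, by omega, ?_, ?_, ?_, ?_, ?_⟩, ?_⟩
    · omega
    · split_ifs at hx ⊢ <;> intro r hr <;> rw [hQ, if_neg (by omega)] <;> exact hx r hr
    · rw [hQ, if_pos rfl]
    · rw [hQ, if_neg (by omega)]; exact h0
    · intro r hr; rw [hQ, hQ, if_neg (by omega), if_neg (by omega)]; exact hs r hr
    · rw [hQ, hQ, if_pos rfl, if_neg (by omega)]; right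
      rw [show N + 2 - 1 = N + 1 by omega]; simp only; linarith
    · push_cast at hz2; omega
    · intro h; omega
    · intro h; omega
    · intro _
      refine ⟨by rw [hQ, if_pos rfl], Prod.ext hxn ?_⟩
      simp only; linarith
    · intro s _ h _; rw [hQ, if_neg h]
    · refine ⟨by omega, fun s hs1 => ?_⟩
      rw [hQ]
      split_ifs with h
      · subst h; exact hb
      · exact hwb.2 s (by omega)
  · have e1 : (pt a t).2 = (pt a (t+1)).2 - 2 := by
      rcases hs t (by omega) with h | h
      · linarith
      · have := hmax t (by omega) (by rcases hs' t (by omega) with h' | h' <;> linarith)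
        linarith
    obtain ⟨z, hz, hz2⟩ := heightsB _ ε l a Ha (t+1) (by omega)
    obtain ⟨z', hz', hz2'⟩ := heightsB _ ε l a' Ha' (t+1) (by omega)
    have hzz : z' + 4 ≤ z := by
      have : z' < z := by rw [hz, hz'] at hlt; exact_mod_cast hlt
      omega
    have hzzR : (z':ℝ) + 4 ≤ z := by exact_mod_cast hzz
    have hio : ((iotaB (N+2) (t+1, z-2-2)).1:ℝ) = (pt a (t+1)).1 := by
      rw [spin_x _ ε l a Ha _ (by omega)]
      exact iota_eq (N+2) l (t+1) (z-2-2) (by omega) hlo (by omega)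
    by_cases htN : t = N
    · subst htN
      have e2 : (pt a (t+2)).2 - (pt a (t+1)).2 = -(1+ε) := by
        rcases hN with h | h
        · have := hmax (t+2) (by omega) (by rcases hN' with h' | h' <;> linarith)
          linarith
        · exact h
      have hb : (pt a' (t+2)).2 ≤ z - 3 + ε := by
        rcases hN' with h | h <;> linarith
      have hQ : ∀ s, pt ((a.set (t+1) ((pt a (t+1)).1, (z:ℝ) - 4)).set (t+2) (2 * ((t+2:ℕ):ℝ) - 1, (z:ℝ) - 3 + ε)) s
        = if s = t+2 then (2 * ((t+2:ℕ):ℝ) - 1, (z:ℝ) - 3 + ε) else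
          if s = t+1 then ((pt a (t+1)).1, (z:ℝ) - 4) else pt a s := by
        intro s
        rw [pt_set _ _ _ _ (by simp; omega), pt_set _ _ _ _ (by omega)]
      have hQl : ((a.set (t+1) ((pt a (t+1)).1, (z:ℝ) - 4)).set (t+2) (2 * ((t+2:ℕ):ℝ) - 1, (z:ℝ) - 3 + ε)).length = a.length := by simp
      generalize ((a.set (t+1) ((pt a (t+1)).1, (z:ℝ) - 4)).set (t+2) (2 * ((t+2:ℕ):ℝ) - 1, (z:ℝ) - 3 + ε)) = q at hQ hQl
      have hQ1 : pt q (t+1) = ((pt a (t+1)).1, (z:ℝ) - 4) := by rw [hQ, if_neg (by omega), if_pos rfl]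
      have hQ2 : pt q (t+2) = (2 * ((t+2:ℕ):ℝ) - 1, (z:ℝ) - 3 + ε) := by rw [hQ, if_pos rfl]
      have hQ3 : ∀ s, s < t + 1 → pt q s = pt a s := by
        intro s h; rw [hQ, if_neg (by omega), if_neg (by omega)]
      refine ⟨q, t+1, z-2, ⟨⟨?_, ?_, ?_, ?_, ?_, ?_⟩, by omega, by omega, ?_, ?_, ?_, ?_, ?_⟩, ?_⟩
      · omega
      · split_ifs at hx ⊢ <;> intro r hr <;> (by_cases h : r = t + 1
                                              · subst h; rw [hQ1]; exact hx _ hr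
                                              · rw [hQ3 r (by omega)]; exact hx r hr)
      · rw [hQ2]
      · rw [hQ3 _ (by omega)]; exact h0
      · intro r hr
        by_cases h : r = t
        · subst h; rw [hQ1, hQ3 _ (by omega)]; right; simp only; linarith
        · rw [hQ3 _ (by omega), hQ3 _ (by omega)]; exact hs r hr
      · rw [show t + 2 - 1 = t + 1 by omega, hQ1, hQ2]; left; simp only; linarith
      · push_cast at hz2; omega
      · intro _
        rw [hio]
        refine ⟨?_, ?_, ?_, ?_⟩
        · rw [hQ1]; ext <;> simp; ring
        · ext <;> simp [hz]
        · rw [hQ3 _ (by omega)]; simp; linarith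
        · rw [hQ2]; push_cast; linarith
      · intro _
        constructor
        · rw [hQ2]; ext <;> simp; ring
        · refine Prod.ext hxn ?_
          push_cast; linarith
      · intro h; omega
      · intro s _ h h2; rw [hQ3 _ (by omega)]
      · refine ⟨by omega, fun s hs1 => ?_⟩
        by_cases h : s = t + 2
        · subst h; rw [hQ2]; exact hb
        · by_cases h : s = t + 1
          · subst h; rw [hQ1]; simp only; linarith
          · rw [hQ3 _ (by omega)]; exact hwb.2 s (by omega)
    · have e2 : (pt a (t+2)).2 = (pt a (t+1)).2 - 2 := by
        rcases hs (t+1) (by omega) with h | h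
        · have := hmax (t+2) (by omega) (by rcases hs' (t+1) (by omega) with h' | h' <;> linarith)
          linarith
        · linarith
      have hQ : ∀ s, pt (a.set (t+1) ((pt a (t+1)).1, (z:ℝ) - 4)) s
        = if s = t+1 then ((pt a (t+1)).1, (z:ℝ) - 4) else pt a s :=
        fun s => pt_set _ _ _ _ hr
      have hQl : (a.set (t+1) ((pt a (t+1)).1, (z:ℝ) - 4)).length = a.length := by simp
      generalize a.set (t+1) ((pt a (t+1)).1, (z:ℝ) - 4) = q at hQ hQl
      have hQ1 : pt q (t+1) = ((pt a (t+1)).1, (z:ℝ) - 4) := by rw [hQ, if_pos rfl]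
      have hQ3 : ∀ s, s ≠ t + 1 → pt q s = pt a s := by
        intro s h; rw [hQ, if_neg (by omega)]
      refine ⟨q, t+1, z-2, ⟨⟨?_, ?_, ?_, ?_, ?_, ?_⟩, by omega, by omega, ?_, ?_, ?_, ?_, ?_⟩, ?_⟩
      · omega
      · split_ifs at hx ⊢ <;> intro r hr <;> (by_cases h : r = t + 1
                                              · subst h; rw [hQ1]; exact hx _ hr
                                              · rw [hQ3 r (by omega)]; exact hx r hr)
      · rw [hQ3 _ (by omega)]; exact hxn
      · rw [hQ3 _ (by omega)]; exact h0
      · intro r hr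
        by_cases h : r = t
        · subst h; rw [hQ1, hQ3 _ (by omega)]; right; simp only; linarith
        · by_cases h2 : r = t + 1
          · subst h2; rw [hQ1, hQ3 _ (by omega)]; left; simp only; linarith
          · rw [hQ3 _ (by omega), hQ3 _ (by omega)]; exact hs r hr
      · rw [show N + 2 - 1 = N + 1 by omega, hQ3 _ (by omega), hQ3 _ (by omega)]; exact hN
      · push_cast at hz2; omega
      · intro _
        rw [hio]
        refine ⟨?_, ?_, ?_, ?_⟩
        · rw [hQ1]; ext <;> simp; ring
        · ext <;> simp [hz]
        · rw [hQ3 _ (by omega)]; simp; linarith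
        · rw [hQ3 _ (by omega)]; push_cast; linarith
      · intro h; omega
      · intro h; omega
      · intro s _ h h2; rw [hQ3 _ (by omega)]
      · refine ⟨by omega, fun s hs1 => ?_⟩
        by_cases h : s = t + 1
        · subst h; rw [hQ1]; simp only; linarith
        · rw [hQ3 _ (by omega)]; exact hwb.2 s (by omega)

theorem lift_lemma (n : ℕ) (ε : ℝ) (hn : 2 ≤ n) (he : 0 < ε) (he2 : ε < 1 / 2)
    (l : ℤ) (q a : List (ℝ × ℝ)) (j : ℕ) (m : ℤ)
    (H : SpinRaise n ε l q a j m) (i : ℕ) (k : ℤ) (p p'' : List (ℝ × ℝ))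
    (hp : p ∈ pathsB n ε i k) (hp'' : p'' ∈ pathsB n ε i k) (hlen : p.length = p''.length)
    (φ : ℕ → ℕ) (hφ : ∀ r, r ≤ n → φ r < p''.length)
    (hinj : ∀ r s, r ≤ n → s ≤ n → φ r = φ s → r = s)
    (hφp : ∀ r, r ≤ n → pt p (φ r) = pt a r) (hφq : ∀ r, r ≤ n → pt p'' (φ r) = pt q r)
    (hnb : ∀ r, 1 ≤ r → r < n → 1 ≤ φ r ∧ φ r + 1 < p''.length ∧
      ((φ r - 1 = φ (r - 1) ∧ φ r + 1 = φ (r + 1)) ∨ (φ r - 1 = φ (r + 1) ∧ φ r + 1 = φ (r - 1))))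
    (hout : ∀ s, s < p''.length → (∀ r, r ≤ n → s ≠ φ r) → pt p s = pt p'' s ∧
      (j < n → (pt p'' s).1 ≠ (pt q j).1) ∧
      (j = n → pt p'' s ≠ (2 * (n:ℝ) - 1, (m:ℝ) - 1 + ε) ∧
        pt p'' s ≠ (2 * (n:ℝ) - 1, (m:ℝ) + 1 - ε))) :
    (j, m) ∈ W (.B n ε) ∧ LoweredTo (.B n ε) i k j m p'' p := by
  have hj1 := H.j1
  have hjn := H.jn
  have hev := H.even
  have hqx := H.mem
  have key : ∀ s, s < p''.length → (pt p'' s).1 = (pt q j).1 → j < n → s = φ j := by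
    intro s hs h1 h2
    by_cases hc : ∃ r, r ≤ n ∧ s = φ r
    · obtain ⟨r, hr, rfl⟩ := hc
      rw [hφq r hr, spin_x n ε l q hqx j h2] at h1
      congr 1
      by_cases hrn : r = n
      · subst hrn
        rw [hqx.2.2.1] at h1
        exfalso
        split_ifs at h1
        · have h3 : 2 * (r:ℤ) - 1 = 2 * (j:ℤ) := by exact_mod_cast h1
          omega
        · have h3 : 2 * (r:ℤ) - 1 = 4 * (r:ℤ) - 2 - 2 * j := by exact_mod_cast h1
          omega
      · rw [spin_x n ε l q hqx r (by omega)] at h1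
        split_ifs at h1
        · have : (r:ℝ) = j := by linarith
          exact_mod_cast this
        · have : (r:ℝ) = j := by linarith
          exact_mod_cast this
    · push Not at hc
      exact absurd h1 ((hout s hs hc).2.1 h2)
  refine ⟨?_, hp'', hp, ?_, ?_⟩
  · simp only [W, X, XB, rr, Set.mem_ofPred_eq]
    split_ifs with h
    · left; refine ⟨h, ?_⟩; push_cast; omega
    · right; refine ⟨hj1, by omega, ?_⟩; push_cast; omega
  · by_cases h : j = n
    · subst h
      obtain ⟨hq, ha⟩ := H.last rfl
      have no1 : (2 * (j:ℝ) - 1, (m:ℝ) - 1 + ε) ∉ p'' := by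
        rw [mem_pt]
        rintro ⟨s, hs, hs2⟩
        by_cases hc : ∃ r, r ≤ j ∧ s = φ r
        · obtain ⟨r, hr, rfl⟩ := hc
          rw [hφq r hr] at hs2
          by_cases hrn : r = j
          · subst hrn
            rw [hq] at hs2
            have := congrArg Prod.snd hs2
            simp only at this; linarith
          · have h1 := congrArg Prod.fst hs2
            rw [spin_x j ε l q hqx r (by omega)] at h1
            simp only at h1
            split_ifs at h1
            · have h3 : 2 * (r:ℤ) = 2 * (j:ℤ) - 1 := by exact_mod_cast h1
              omega
            · have h3 : 4 * (j:ℤ) - 2 - 2 * r = 2 * (j:ℤ) - 1 := by exact_mod_cast h1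
              omega
        · push Not at hc
          exact ((hout s hs hc).2.2 rfl).1 hs2
      have no2 : (2 * (j:ℝ) - 1, (m:ℝ) + 1 - ε) ∉ p'' := by
        rw [mem_pt]
        rintro ⟨s, hs, hs2⟩
        by_cases hc : ∃ r, r ≤ j ∧ s = φ r
        · obtain ⟨r, hr, rfl⟩ := hc
          rw [hφq r hr] at hs2
          by_cases hrn : r = j
          · subst hrn
            rw [hq] at hs2
            have := congrArg Prod.snd hs2
            simp only at this; linarith
          · have h1 := congrArg Prod.fst hs2
            rw [spin_x j ε l q hqx r (by omega)] at h1
            simp only at h1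
            split_ifs at h1
            · have h3 : 2 * (r:ℤ) = 2 * (j:ℤ) - 1 := by exact_mod_cast h1
              omega
            · have h3 : 4 * (j:ℤ) - 2 - 2 * r = 2 * (j:ℤ) - 1 := by exact_mod_cast h1
              omega
        · push Not at hc
          exact ((hout s hs hc).2.2 rfl).2 hs2
      constructor
      · simp only [Cp, rr, Set.mem_ofPred_eq, XB, if_true]
        refine ⟨Or.inl ⟨trivial, ?_⟩, Or.inr ⟨trivial, ?_, ?_⟩⟩
        · push_cast; omega
        · rw [mem_pt]
          refine ⟨φ j, hφ j le_rfl, ?_⟩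
          rw [hφq j le_rfl, hq]; push_cast; rfl
        · push_cast; exact no1
      · simp only [Cp, rr, Set.mem_ofPred_eq, XB, if_true]
        rintro ⟨_, ⟨r, _, _, _, _, h5, _⟩ | ⟨_, h5, _⟩⟩
        · apply h5; simp [iotaB]
        · apply no2; push_cast at h5; exact h5
    · have hlt : j < n := by omega
      obtain ⟨hq, ha, hd1, hd2⟩ := H.low hlt
      obtain ⟨hn1, hn2, hn3⟩ := hnb j hj1 hlt
      have hio : ((iotaB n (j, m-2)).1 = 2 * (j:ℤ)) ∨ ((iotaB n (j, m-2)).1 = 4 * (n:ℤ) - 2 - 2 * j) := by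
        unfold iotaB
        simp only [if_neg h]
        split_ifs <;> simp
      have hio2 : (iotaB n (j, m-2)).2 = m - 2 := by
        unfold iotaB
        simp only [if_neg h]
        split_ifs <;> rfl
      constructor
      · simp only [Cp, rr, Set.mem_ofPred_eq, XB, if_true, if_neg h]
        push_cast
        refine ⟨Or.inr ⟨hj1, hlt, by omega⟩, Or.inl ⟨φ j, hn1, hn2, ?_, by omega, by omega, by omega, ?_⟩⟩
        · rw [hφq j hjn, hq, hio2]; push_cast; rfl
        · rcases hn3 with ⟨e1, e2⟩ | ⟨e1, e2⟩
          · rw [e1, e2, hφq _ hjn, hφq _ (by omega), hφq _ (by omega), hq]; exact ⟨hd1, hd2⟩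
          · rw [e1, e2, hφq _ hjn, hφq _ (by omega), hφq _ (by omega), hq]; exact ⟨hd2, hd1⟩
      · simp only [Cp, rr, Set.mem_ofPred_eq, XB, if_true, if_neg h]
        push_cast
        rintro ⟨_, ⟨r, _, hr, h5, _⟩ | ⟨h5, _⟩⟩
        · have e1 : iotaB n (j, m+2) = ((iotaB n (j, m-2)).1, m+2) := by
            unfold iotaB
            simp only [if_neg h]
            by_cases h6 : (2 * (n:ℤ) + (m + 2) - 2 * j) % 4 = 2
            · rw [if_pos h6, if_pos (by omega)]
            · rw [if_neg h6, if_neg (by omega)]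
          rw [e1] at h5
          have := key r (by omega) (by rw [h5, hq]) hlt
          rw [this, hφq j hjn, hq] at h5
          have := congrArg Prod.snd h5
          push_cast at this
          linarith
        · exact h h5
  · simp only
    have rest : ∀ s, s < p''.length → s ≠ φ j → ¬ (j + 1 = n ∧ s = φ n) → pt p s = pt p'' s := by
      intro s hs h1 h2
      by_cases hc : ∃ r, r ≤ n ∧ s = φ r
      · obtain ⟨r, hr, rfl⟩ := hc
        rw [hφp r hr, hφq r hr]
        refine (H.other r hr ?_ ?_).symm
        · rintro rfl; exact h1 rfl
        · rintro ⟨h3, rfl⟩; exact h2 ⟨h3, rfl⟩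
      · push Not at hc
        exact (hout s hs hc).1
    split_ifs with h h'
    · subst h
      obtain ⟨hq, ha⟩ := H.last rfl
      exact ⟨φ j, hφ j le_rfl, by rw [hφq j le_rfl, hq], hlen, by rw [hφp j le_rfl, ha],
        fun s hs h1 => rest s hs h1 (by omega)⟩
    · obtain ⟨hq, ha, _, _⟩ := H.low (by omega)
      obtain ⟨hq2, ha2⟩ := H.lowlast (by omega)
      refine ⟨φ j, φ n, hφ j hjn, hφ n le_rfl, fun hh => h (hinj _ _ hjn le_rfl hh),
        by rw [hφq j hjn, hq], by rw [hφq n le_rfl, hq2], hlen, by rw [hφp j hjn, ha],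
        by rw [hφp n le_rfl, ha2], fun s hs h1 h2 => rest s hs h1 (fun h3 => h2 h3.2)⟩
    · obtain ⟨hq, ha, _, _⟩ := H.low (by omega)
      exact ⟨φ j, hφ j hjn, by rw [hφq j hjn, hq], hlen, by rw [hφp j hjn, ha],
        fun s hs h1 => rest s hs h1 (by omega)⟩

theorem wb_split (n : ℕ) (a b a' b' : List (ℝ × ℝ)) (ha : a.length = n + 1) (hb : b.length = n + 1)
    (ha' : a'.length = n + 1) (hb' : b'.length = n + 1) :
    WeaklyBelow (a ++ b.reverse) (a' ++ b'.reverse) ↔ WeaklyBelow a a' ∧ WeaklyBelow b b' := by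
  constructor
  · rintro ⟨_, h⟩
    refine ⟨⟨by omega, fun r hr => ?_⟩, ⟨by omega, fun r hr => ?_⟩⟩
    · have := h r (by simp; omega)
      rwa [pt_append_left _ _ _ (by omega), pt_append_left _ _ _ (by omega)] at this
    · have := h (2 * n + 1 - r) (by simp; omega)
      rwa [pt_append_rev _ _ n r ha hb (by omega), pt_append_rev _ _ n r ha' hb' (by omega)] at this
  · rintro ⟨⟨_, h1⟩, ⟨_, h2⟩⟩
    refine ⟨by simp; omega, fun r hr => ?_⟩
    simp at hr
    by_cases h : r ≤ n
    · rw [pt_append_left _ _ _ (by omega), pt_append_left _ _ _ (by omega)]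
      exact h1 r (by omega)
    · have e := pt_append_rev a b n (2 * n + 1 - r) ha hb (by omega)
      have e' := pt_append_rev a' b' n (2 * n + 1 - r) ha' hb' (by omega)
      rw [show 2 * n + 1 - (2 * n + 1 - r) = r by omega] at e e'
      rw [e, e']
      exact h2 _ (by omega)

theorem col_ne (n : ℕ) (ε : ℝ) (l l' : ℤ) (hl : l % 2 = 1) (hl' : (l' - l) % 4 = 2)
    (a b : List (ℝ × ℝ)) (ha : a ∈ pathsBspin n ε l) (hb : b ∈ pathsBspin n ε l')
    (r j : ℕ) (hr : r ≤ n) (hj : j < n) : (pt b r).1 ≠ (pt a j).1 := by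
  intro h1
  rw [spin_x n ε l a ha j hj] at h1
  by_cases hrn : r = n
  · subst hrn
    rw [hb.2.2.1] at h1
    split_ifs at h1
    · have h3 : 2 * (r:ℤ) - 1 = 2 * (j:ℤ) := by exact_mod_cast h1
      omega
    · have h3 : 2 * (r:ℤ) - 1 = 4 * (r:ℤ) - 2 - 2 * j := by exact_mod_cast h1
      omega
  · rw [spin_x n ε l' b hb r (by omega)] at h1
    split_ifs at h1
    · omega
    · have h3 : 2 * (r:ℤ) = 4 * (n:ℤ) - 2 - 2 * j := by exact_mod_cast h1
      omega
    · have h3 : 4 * (n:ℤ) - 2 - 2 * r = 2 * (j:ℤ) := by exact_mod_cast h1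
      omega
    · omega

theorem x_last (n : ℕ) (ε : ℝ) (l : ℤ) (b : List (ℝ × ℝ)) (hb : b ∈ pathsBspin n ε l)
    (r : ℕ) (hr : r ≤ n) (h1 : (pt b r).1 = 2 * (n:ℝ) - 1) : r = n := by
  by_contra hrn
  rw [spin_x n ε l b hb r (by omega)] at h1
  split_ifs at h1
  · have h3 : 2 * (r:ℤ) = 2 * (n:ℤ) - 1 := by exact_mod_cast h1
    omega
  · have h3 : 4 * (n:ℤ) - 2 - 2 * r = 2 * (n:ℤ) - 1 := by exact_mod_cast h1
    omega

theorem stmtB (n : ℕ) (ε : ℝ) (hn : 2 ≤ n) (he : 0 < ε) (he2 : ε < 1 / 2)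
    (i : ℕ) (k : ℤ) (hik : (i, k) ∈ XB n)
    (p p' : List (ℝ × ℝ)) (hp : p ∈ pathsB n ε i k) (hp' : p' ∈ pathsB n ε i k)
    (hwb : WeaklyBelow p p') (hne : p ≠ p') :
    ∃ jl ∈ W (.B n ε), ∃ q : List (ℝ × ℝ),
      LoweredTo (.B n ε) i k jl.1 jl.2 q p ∧ WeaklyBelow q p' := by
  have Hp := hp
  simp only [XB, Set.mem_ofPred_eq] at hik
  by_cases hin : i = n
  · have e : pathsB n ε i k = pathsBspin n ε k := by simp [pathsB, hin]
    rw [e] at hp hp'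
    obtain ⟨q, j, m, H, hw⟩ := spin_lemma n ε k hn he he2 (by omega) p p' hp hp' hwb hne
    have hql := H.mem.1
    obtain ⟨h1, h2⟩ := lift_lemma n ε hn he he2 k q p j m H i k p q Hp (by rw [e]; exact H.mem)
      (by rw [hp.1, hql]) id (fun r hr => by simp; omega) (fun r s _ _ h => h) (fun _ _ => rfl)
      (fun _ _ => rfl) (fun r h1 h2 => ⟨h1, by simp; omega, Or.inl ⟨rfl, rfl⟩⟩)
      (fun s hs h => absurd rfl (h s (by omega)))
    exact ⟨(j, m), h1, q, h2, hw⟩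
  · obtain ⟨a, b, ha, hb, rfl, hab1, hab⟩ : ∃ a b : List (ℝ × ℝ),
        a ∈ pathsBspin n ε (k - (2 * (n : ℤ) - 2 * (i : ℤ) - 1)) ∧
        b ∈ pathsBspin n ε (k + (2 * (n : ℤ) - 2 * (i : ℤ) - 1)) ∧
        p = a ++ b.reverse ∧
        (pt a n).1 = (pt b n).1 ∧ 0 < (pt a n).2 - (pt b n).2 := by
      simpa [pathsB, hin] using hp
    obtain ⟨a', b', ha', hb', rfl, hab1', hab'⟩ : ∃ a b : List (ℝ × ℝ),
        a ∈ pathsBspin n ε (k - (2 * (n : ℤ) - 2 * (i : ℤ) - 1)) ∧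
        b ∈ pathsBspin n ε (k + (2 * (n : ℤ) - 2 * (i : ℤ) - 1)) ∧
        p' = a ++ b.reverse ∧
        (pt a n).1 = (pt b n).1 ∧ 0 < (pt a n).2 - (pt b n).2 := by
      simpa [pathsB, hin] using hp'
    have mk : ∀ c d : List (ℝ × ℝ), c ∈ pathsBspin n ε (k - (2 * (n : ℤ) - 2 * (i : ℤ) - 1)) →
        d ∈ pathsBspin n ε (k + (2 * (n : ℤ) - 2 * (i : ℤ) - 1)) → 0 < (pt c n).2 - (pt d n).2 →
        c ++ d.reverse ∈ pathsB n ε i k := by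
      intro c d hc hd h
      simp only [pathsB, if_neg hin, Set.mem_ofPred_eq]
      exact ⟨c, d, hc, hd, rfl, by rw [hc.2.2.1, hd.2.2.1], h⟩
    rw [wb_split n a b a' b' ha.1 hb.1 ha'.1 hb'.1] at hwb
    obtain ⟨hwa, hwb⟩ := hwb
    have la := ha.1
    have lb := hb.1
    by_cases hbb : b = b'
    · subst hbb
      have hne' : a ≠ a' := by rintro rfl; exact hne rfl
      obtain ⟨q, j, m, H, hw⟩ := spin_lemma n ε _ hn he he2 (by omega) a a' ha ha' hwa hne'
      have lq := H.mem.1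
      have hqb : 0 < (pt q n).2 - (pt b n).2 := by
        have := hw.2 n (by omega); linarith
      obtain ⟨h1, h2⟩ := lift_lemma n ε hn he he2 _ q a j m H i k (a ++ b.reverse) (q ++ b.reverse)
        Hp (mk q b H.mem hb hqb) (by simp; omega) id (fun r hr => by simp; omega)
        (fun r s _ _ h => h) (fun r hr => pt_append_left _ _ _ (by simp; omega))
        (fun r hr => pt_append_left _ _ _ (by simp; omega))
        (fun r h1 h2 => ⟨h1, by simp; omega, Or.inl ⟨rfl, rfl⟩⟩)
        (by
          intro s hs h
          have hsn : ¬ s ≤ n := fun hh => h s hh rfl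
          simp at hs
          obtain ⟨r, hr, rfl⟩ : ∃ r, r ≤ n ∧ s = 2 * n + 1 - r := ⟨2 * n + 1 - s, by omega, by omega⟩
          rw [pt_append_rev a b n r la lb hr, pt_append_rev q b n r lq lb hr]
          refine ⟨rfl, fun hj => col_ne n ε _ _ (by omega) (by omega) q b H.mem hb r j hr hj, ?_⟩
          rintro hj
          obtain ⟨hq, _⟩ := H.last hj
          rw [hq] at hqb
          simp only at hqb
          constructor
          · intro hc
            have := x_last n ε _ b hb r hr (by rw [hc])
            subst this
            rw [hc] at hqb
            simp only at hqb; linarith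
          · intro hc
            have := x_last n ε _ b hb r hr (by rw [hc])
            subst this
            rw [hc] at hqb
            simp only at hqb; linarith)
      exact ⟨(j, m), h1, _, h2, (wb_split n q b a' b lq lb ha'.1 lb).2 ⟨hw, hwb⟩⟩
    · obtain ⟨q, j, m, H, hw⟩ := spin_lemma n ε _ hn he he2 (by omega) b b' hb hb' hwb hbb
      have lq := H.mem.1
      have hqb : (pt q n).2 ≤ (pt b n).2 := by
        by_cases hj : j = n
        · obtain ⟨e1, e2⟩ := H.last hj
          rw [e1, e2]; simp only; linarith
        · by_cases hj2 : j + 1 = n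
          · obtain ⟨e1, e2⟩ := H.lowlast hj2
            rw [e1, e2]; simp only; linarith
          · rw [H.other n le_rfl (by omega) (by omega)]
      obtain ⟨h1, h2⟩ := lift_lemma n ε hn he he2 _ q b j m H i k (a ++ b.reverse) (a ++ q.reverse)
        Hp (mk a q ha H.mem (by linarith)) (by simp; omega) (fun r => 2 * n + 1 - r)
        (fun r hr => by simp; omega)
        (fun r s _ _ h => by omega) (fun r hr => pt_append_rev _ _ n r la lb hr)
        (fun r hr => pt_append_rev _ _ n r la lq hr)
        (fun r h1 h2 => ⟨by omega, by simp; omega, Or.inr ⟨by omega, by omega⟩⟩)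
        (by
          intro s hs h
          simp at hs
          have hsn : s ≤ n := by
            by_contra hh
            exact h (2 * n + 1 - s) (by omega) (by omega)
          rw [pt_append_left _ _ _ (by omega), pt_append_left _ _ _ (by omega)]
          refine ⟨rfl, fun hj => col_ne n ε _ _ (by omega) (by omega) q a H.mem ha s j hsn hj, ?_⟩
          rintro hj
          obtain ⟨_, hb2⟩ := H.last hj
          rw [hb2] at hab
          simp only at hab
          constructor
          · intro hc
            have := x_last n ε _ a ha s hsn (by rw [hc])
            subst this
            rw [hc] at hab
            simp only at hab; linarith
          · intro hc
            have := x_last n ε _ a ha s hsn (by rw [hc])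
            subst this
            rw [hc] at hab
            simp only at hab; linarith)
      exact ⟨(j, m), h1, _, h2, (wb_split n a q a' b' la lq ha'.1 hb'.1).2 ⟨hwa, hw⟩⟩

/-- if `p, p' ∈ 𝒫_{i,k}`, `p` is weakly below `p'` and `p ≠ p'`, then there is
`(j,ℓ) ∈ W` such that `p` can be raised at `(j,ℓ)` and the raised path `p𝒜_{j,ℓ}` (i.e. the
path `q` with `q𝒜_{j,ℓ}⁻¹ = p`) is weakly below `p'`. -/
theorem stmt3 (S : Setting) (hS : S.valid) (i : ℕ) (k : ℤ) (hik : (i, k) ∈ X S)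
    (p p' : List (ℝ × ℝ)) (hp : p ∈ P S i k) (hp' : p' ∈ P S i k)
    (hwb : WeaklyBelow p p') (hne : p ≠ p') :
    ∃ jl ∈ W S, ∃ q : List (ℝ × ℝ),
      LoweredTo S i k jl.1 jl.2 q p ∧ WeaklyBelow q p' := by
  cases S with
  | A n => exact stmtA n i k hik p p' hp hp' hwb hne
  | B n ε => exact stmtB n ε hS.1 hS.2.1 hS.2.2 i k hik p p' hp hp' hwb hne

end Paper
end

section
/- Let the setting be type A_N or type B_N and let (i,k) ∈ X. Any two paths p, p′ ∈ P_{i,k} are connected by moves without cancellation: p can be obtained from p′ by a finite sequence of raising and lowering moves at points of W such that no point (j,ℓ) ∈ W occurs in the sequence both as the site of a raising move and as the site of a lowering move. -/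
namespace Paper

/-- The path with columns `x` and heights `y`. -/
noncomputable def mkP (L : ℕ) (x y : ℕ → ℝ) : List (ℝ × ℝ) :=
  (List.range L).map (fun r => (x r, y r))

theorem mkP_length (L : ℕ) (x y : ℕ → ℝ) : (mkP L x y).length = L := by
  simp [mkP]

theorem pt_mkP {L : ℕ} {x y : ℕ → ℝ} {r : ℕ} (h : r < L) : pt (mkP L x y) r = (x r, y r) := by
  simp [pt, mkP, List.getD_eq_getElem?_getD, h]

theorem mem_mkP {L : ℕ} {x y : ℕ → ℝ} {a : ℝ × ℝ} :
    a ∈ mkP L x y ↔ ∃ r < L, x r = a.1 ∧ y r = a.2 := by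
  simp [mkP, Prod.ext_iff]

theorem eq_mkP {L : ℕ} {x : ℕ → ℝ} {p : List (ℝ × ℝ)} (hl : p.length = L)
    (hx : ∀ r < L, (pt p r).1 = x r) : p = mkP L x (fun r => (pt p r).2) := by
  apply List.ext_getElem
  · rw [mkP_length, hl]
  · intro r h1 h2
    have := hx r (hl ▸ h1)
    have h3 : pt p r = p[r] := by simp [pt, List.getD_eq_getElem?_getD, h1]
    simp only [mkP, List.getElem_map, List.getElem_range]
    rw [← this, h3]

theorem mkP_congr {L : ℕ} {x y z : ℕ → ℝ} (h : ∀ r < L, y r = z r) : mkP L x y = mkP L x z := by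
  simp only [mkP]
  apply List.map_congr_left
  intro r hr
  rw [h r (List.mem_range.1 hr)]

theorem MoveSeq.append {S : Setting} {i : ℕ} {k : ℤ} {p q r : List (ℝ × ℝ)}
    {ms ms' : List (Bool × (ℕ × ℤ))} (h : MoveSeq S i k p q ms) (h' : MoveSeq S i k q r ms') :
    MoveSeq S i k p r (ms ++ ms') := by
  induction h with
  | nil p => exact h'
  | lower h1 h2 _ ih => exact MoveSeq.lower h1 h2 (ih h')
  | raise h1 h2 _ ih => exact MoveSeq.raise h1 h2 (ih h')

/-- Conclusion of the key lemma: a lowering step from `y` staying weakly above `z`. -/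
def Concl (S : Setting) (i : ℕ) (k : ℤ) (pos : ℕ × ℤ → ℕ) (L : ℕ) (x : ℕ → ℝ)
    (G : (ℕ → ℝ) → Prop) (y z : ℕ → ℝ) : Prop :=
  ∃ jl ∈ W S, ∃ y', G y' ∧ LoweredTo S i k jl.1 jl.2 (mkP L x y) (mkP L x y') ∧
    (∀ r < L, y r ≤ y' r ∧ y' r ≤ z r) ∧ pos jl < L ∧ y (pos jl) < jl.2 ∧
    (jl.2 : ℝ) < y' (pos jl) ∧ y (pos jl) + 1 ≤ y' (pos jl)

theorem chain (S : Setting) (i : ℕ) (k : ℤ) (pos : ℕ × ℤ → ℕ) (L : ℕ) (x : ℕ → ℝ)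
    (G : (ℕ → ℝ) → Prop)
    (hkey : ∀ y z, G y → G z → (∀ r < L, y r ≤ z r) → (∃ r < L, y r < z r) →
      Concl S i k pos L x G y z) (z : ℕ → ℝ) (hz : G z) (M : ℕ) :
    ∀ y, G y → (∀ r < L, y r ≤ z r) → ∑ r ∈ Finset.range L, (z r - y r) ≤ M →
    ∃ D : List (ℕ × ℤ), MoveSeq S i k (mkP L x y) (mkP L x z) (D.map (fun s => (true, s))) ∧
      MoveSeq S i k (mkP L x z) (mkP L x y) (D.reverse.map (fun s => (false, s))) ∧
      ∀ jl ∈ D, pos jl < L ∧ y (pos jl) < jl.2 ∧ (jl.2 : ℝ) < z (pos jl) := by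
  induction M with
  | zero =>
    intro y hy hle hs
    have h0 : ∀ r ∈ Finset.range L, z r - y r = 0 := by
      rw [← Finset.sum_eq_zero_iff_of_nonneg]
      · apply le_antisymm
        · simpa using hs
        · exact Finset.sum_nonneg (fun r hr => sub_nonneg.2 (hle r (Finset.mem_range.1 hr)))
      · exact (fun r hr => sub_nonneg.2 (hle r (Finset.mem_range.1 hr)))
    have : mkP L x y = mkP L x z := mkP_congr (fun r hr => by
      have := h0 r (Finset.mem_range.2 hr); linarith)
    refine ⟨[], ?_, ?_, by simp⟩
    · rw [this]; exact MoveSeq.nil _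
    · rw [this]; exact MoveSeq.nil _
  | succ M ih =>
    intro y hy hle hs
    by_cases hlt : ∃ r < L, y r < z r
    · obtain ⟨jl, hW, y', hy', hlow, hbd, hpos, h1, h2, h3⟩ := hkey y z hy hz hle hlt
      have hsum : ∑ r ∈ Finset.range L, y r + 1 ≤ ∑ r ∈ Finset.range L, y' r := by
        have e1 := Finset.add_sum_erase (Finset.range L) y (Finset.mem_range.2 hpos)
        have e2 := Finset.add_sum_erase (Finset.range L) y' (Finset.mem_range.2 hpos)
        have e3 : ∑ r ∈ (Finset.range L).erase (pos jl), y r ≤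
            ∑ r ∈ (Finset.range L).erase (pos jl), y' r :=
          Finset.sum_le_sum (fun r hr =>
            (hbd r (Finset.mem_range.1 (Finset.mem_of_mem_erase hr))).1)
        linarith
      rw [Finset.sum_sub_distrib] at hs
      push_cast at hs
      obtain ⟨D, m1, m2, m3⟩ := ih y' hy' (fun r hr => (hbd r hr).2) (by
        rw [Finset.sum_sub_distrib]; linarith)
      refine ⟨jl :: D, ?_, ?_, ?_⟩
      · exact MoveSeq.lower hW hlow m1
      · rw [List.reverse_cons, List.map_append]
        exact m2.append (MoveSeq.raise hW hlow (MoveSeq.nil _))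
      · intro s hs
        rcases List.mem_cons.1 hs with rfl | hs
        · exact ⟨hpos, h1, lt_of_lt_of_le h2 (hbd _ hpos).2⟩
        · obtain ⟨a, b, c⟩ := m3 s hs
          exact ⟨a, lt_of_le_of_lt (hbd _ a).1 b, c⟩
    · have : mkP L x y = mkP L x z := mkP_congr (fun r hr => by
        push Not at hlt
        exact le_antisymm (hle r hr) (hlt r hr))
      refine ⟨[], ?_, ?_, by simp⟩
      · rw [this]; exact MoveSeq.nil _
      · rw [this]; exact MoveSeq.nil _

theorem generic (S : Setting) (i : ℕ) (k : ℤ) (pos : ℕ × ℤ → ℕ) (L : ℕ) (x : ℕ → ℝ)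
    (G : (ℕ → ℝ) → Prop)
    (hP : ∀ p ∈ P S i k, ∃ y, G y ∧ p = mkP L x y)
    (hmin : ∀ y z, G y → G z → G (fun r => min (y r) (z r)))
    (hkey : ∀ y z, G y → G z → (∀ r < L, y r ≤ z r) → (∃ r < L, y r < z r) →
      Concl S i k pos L x G y z)
    (p p' : List (ℝ × ℝ)) (hp : p ∈ P S i k) (hp' : p' ∈ P S i k) :
    ∃ ms : List (Bool × (ℕ × ℤ)), MoveSeq S i k p' p ms ∧
      ∀ jl : ℕ × ℤ, ¬((true, jl) ∈ ms ∧ (false, jl) ∈ ms) := by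
  obtain ⟨y, hy, rfl⟩ := hP p hp
  obtain ⟨z, hz, rfl⟩ := hP p' hp'
  have ht := hmin y z hy hz
  obtain ⟨M, hM⟩ := exists_nat_ge (∑ r ∈ Finset.range L, (y r - min (y r) (z r)))
  obtain ⟨M', hM'⟩ := exists_nat_ge (∑ r ∈ Finset.range L, (z r - min (y r) (z r)))
  obtain ⟨D, a1, a2, a3⟩ := chain S i k pos L x G hkey y hy M _ ht
    (fun r _ => min_le_left _ _) hM
  obtain ⟨D', b1, b2, b3⟩ := chain S i k pos L x G hkey z hz M' _ ht
    (fun r _ => min_le_right _ _) hM'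
  refine ⟨_, b2.append a1, ?_⟩
  rintro jl ⟨h1, h2⟩
  simp only [List.mem_append, List.mem_map, List.mem_reverse, Prod.mk.injEq] at h1 h2
  have h1' : jl ∈ D := by
    rcases h1 with ⟨s, _, h, _⟩ | ⟨s, hs, _, rfl⟩
    · simp at h
    · exact hs
  have h2' : jl ∈ D' := by
    rcases h2 with ⟨s, hs, _, rfl⟩ | ⟨s, _, h, _⟩
    · exact hs
    · simp at h
  have c1 := a3 jl h1'
  have c2 := b3 jl h2'
  rcases min_choice (y (pos jl)) (z (pos jl)) with h | h
  · rw [h] at c1; linarith [c1.2.1, c1.2.2]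
  · rw [h] at c2; linarith [c2.2.1, c2.2.2]

/-- Heights of a path of type A. -/
def GA (n i : ℕ) (k : ℤ) (y : ℕ → ℝ) : Prop :=
  y 0 = (i : ℝ) + (k : ℝ) ∧ y (n + 1) = (n : ℝ) + 1 - (i : ℝ) + (k : ℝ) ∧
    ∀ r, r ≤ n → y (r + 1) - y r = 1 ∨ y (r + 1) - y r = -1

theorem GA_int {n i : ℕ} {k : ℤ} {y : ℕ → ℝ} (h : GA n i k y) (r : ℕ) (hr : r ≤ n + 1) :
    ∃ m : ℤ, y r = (((i : ℤ) + k + r + 2 * m : ℤ) : ℝ) := by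
  induction r with
  | zero => exact ⟨0, by push_cast; rw [h.1]; ring⟩
  | succ r ih =>
    obtain ⟨m, hm⟩ := ih (by omega)
    rcases h.2.2 r (by omega) with e | e
    · exact ⟨m, by push_cast at hm ⊢; linarith⟩
    · exact ⟨m - 1, by push_cast at hm ⊢; linarith⟩

theorem GA_cmp {n i : ℕ} {k : ℤ} {y z : ℕ → ℝ} (h : GA n i k y) (h' : GA n i k z) (r : ℕ)
    (hr : r ≤ n + 1) : y r = z r ∨ y r + 2 ≤ z r ∨ z r + 2 ≤ y r := by
  obtain ⟨m, hm⟩ := GA_int h r hr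
  obtain ⟨m', hm'⟩ := GA_int h' r hr
  rw [hm, hm']
  norm_cast
  omega

theorem GA_mem {n i : ℕ} {k : ℤ} {y : ℕ → ℝ} (h : GA n i k y) :
    mkP (n + 2) (fun r => (r : ℝ)) y ∈ pathsA n i k := by
  refine ⟨mkP_length _ _ _, ?_, ?_, ?_, ?_⟩
  · intro r hr; rw [pt_mkP hr]
  · rw [pt_mkP (by omega)]; exact h.1
  · rw [pt_mkP (by omega)]; exact h.2.1
  · intro r hr; rw [pt_mkP (by omega), pt_mkP (by omega)]; exact h.2.2 r hr

theorem GA_of_mem {n i : ℕ} {k : ℤ} {p : List (ℝ × ℝ)} (h : p ∈ pathsA n i k) :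
    GA n i k (fun r => (pt p r).2) ∧
      p = mkP (n + 2) (fun r => (r : ℝ)) (fun r => (pt p r).2) := by
  obtain ⟨h1, h2, h3, h4, h5⟩ := h
  exact ⟨⟨h3, h4, h5⟩, eq_mkP h1 h2⟩

theorem GA_min {n i : ℕ} {k : ℤ} {y z : ℕ → ℝ} (h : GA n i k y) (h' : GA n i k z) :
    GA n i k (fun r => min (y r) (z r)) := by
  refine ⟨?_, ?_, ?_⟩
  · simp [h.1, h'.1]
  · simp [h.2.1, h'.2.1]
  · intro r hr
    have c := GA_cmp h h' r (by omega)
    have s1 := h.2.2 r hr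
    have s2 := h'.2.2 r hr
    show min (y (r+1)) (z (r+1)) - min (y r) (z r) = 1 ∨
      min (y (r+1)) (z (r+1)) - min (y r) (z r) = -1
    rcases c with c | c | c
    · rw [← c] at s2 ⊢
      rw [min_self]
      rcases min_choice (y (r+1)) (z (r+1)) with e | e <;> rw [e] <;> assumption
    · have : y (r+1) ≤ z (r+1) := by rcases s1 with s1 | s1 <;> rcases s2 with s2 | s2 <;> linarith
      rw [min_eq_left this, min_eq_left (by linarith)]; exact s1
    · have : z (r+1) ≤ y (r+1) := by rcases s1 with s1 | s1 <;> rcases s2 with s2 | s2 <;> linarith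
      rw [min_eq_right this, min_eq_right (by linarith)]; exact s2

theorem exists_min_pos {L : ℕ} {y z : ℕ → ℝ} (h : ∃ r < L, y r < z r) :
    ∃ r < L, y r < z r ∧ ∀ s < L, y s < z s → y r ≤ y s := by
  classical
  obtain ⟨r, hr, h1⟩ := h
  obtain ⟨r, hr, h2⟩ := Finset.exists_min_image ((Finset.range L).filter (fun r => y r < z r)) y
    ⟨r, by simp [hr, h1]⟩
  simp only [Finset.mem_filter, Finset.mem_range] at hr h2
  exact ⟨r, hr.1, hr.2, fun s hs h => h2 s ⟨hs, h⟩⟩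

theorem keyA (n i : ℕ) (k : ℤ) (hik : (i, k) ∈ XA n) (y z : ℕ → ℝ)
    (hy : GA n i k y) (hz : GA n i k z)
    (hle : ∀ r < n + 2, y r ≤ z r) (hlt : ∃ r < n + 2, y r < z r) :
    Concl (.A n) i k Prod.fst (n + 2) (fun r => (r : ℝ)) (GA n i k) y z := by
  obtain ⟨r, hr, hlt, hmin⟩ := exists_min_pos hlt
  obtain ⟨m, hm⟩ := GA_int hy r (by omega)
  have hpar : ((i : ℤ) - k) % 2 = 1 := hik.2.2
  have hr0 : r ≠ 0 := by
    rintro rfl; rw [hy.1, hz.1] at hlt; exact lt_irrefl _ hlt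
  have hrn : r ≠ n + 1 := by
    rintro rfl; rw [hy.2.1, hz.2.1] at hlt; exact lt_irrefl _ hlt
  obtain ⟨t, rfl⟩ : ∃ t, r = t + 1 := ⟨r - 1, by omega⟩
  have h1 : y t = y (t+1) + 1 := by
    rcases hy.2.2 t (by omega) with e | e
    · exfalso
      have a : ¬ y t < z t := fun h => by linarith [hmin t (by omega) h]
      have b := hle t (by omega)
      rcases hz.2.2 t (by omega) with e' | e' <;> linarith
    · linarith
  have h2 : y (t+1+1) = y (t+1) + 1 := by
    rcases hy.2.2 (t+1) (by omega) with e | e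
    · linarith
    · exfalso
      have a : ¬ y (t+1+1) < z (t+1+1) := fun h => by linarith [hmin (t+1+1) (by omega) h]
      have b := hle (t+1+1) (by omega)
      rcases hz.2.2 (t+1) (by omega) with e' | e' <;> linarith
  have h3 : y (t+1) + 2 ≤ z (t+1) := by
    rcases GA_cmp hy hz (t+1) (by omega) with e | e | e <;> linarith
  set Yv : ℤ := (i : ℤ) + k + (t + 1 : ℕ) + 2 * m with hYv
  set y' := Function.update y (t+1) (y (t+1) + 2) with hy'
  have u1 : y' (t+1) = y (t+1) + 2 := by simp [hy']
  have u2 : ∀ s, s ≠ t + 1 → y' s = y s := by intro s hs; simp [hy', hs]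
  have hG : GA n i k y' := by
    refine ⟨?_, ?_, ?_⟩
    · rw [u2 _ (by omega)]; exact hy.1
    · rw [u2 _ (by omega)]; exact hy.2.1
    · intro s hs
      by_cases c1 : s = t + 1
      · subst c1; rw [u1, u2 _ (by omega)]; right; linarith
      · by_cases c2 : s = t
        · subst c2; rw [u1, u2 _ (by omega)]; left; linarith
        · rw [u2 _ c1, u2 _ (by omega)]; exact hy.2.2 s hs
  refine ⟨(t + 1, Yv + 1), ?_, y', hG, ⟨GA_mem hy, GA_mem hG, ⟨?_, ?_⟩, ?_⟩, ?_, ?_, ?_, ?_, ?_⟩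
  · show (_ ∧ _ ∧ _)
    simp only [rr]
    refine ⟨by omega, by omega, by omega⟩
  · show (_ ∧ _ ∧ _ ∧ _ ∧ _)
    simp only [rr]
    refine ⟨by omega, by omega, ?_, ?_, ?_⟩
    · rw [pt_mkP (by omega)]; simp [hm]
    · rw [pt_mkP (by omega)]; simp [← hm, h1]
    · rw [pt_mkP (by omega)]; simp [← hm, h2]
  · rintro ⟨_, _, h, _⟩
    rw [pt_mkP (by omega)] at h
    simp only [rr, Prod.mk.injEq, true_and, hm] at h
    norm_cast at h
    omega
  · refine ⟨t + 1, ?_, ?_, ?_, ?_, ?_⟩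
    · rw [mkP_length]; omega
    · rw [pt_mkP (by omega)]; simp [hm]
    · simp [mkP_length]
    · rw [pt_mkP (by omega), u1]; simp [hm]; ring
    · intro s hs hne
      rw [mkP_length] at hs
      rw [pt_mkP hs, pt_mkP hs, u2 s hne]
  · intro s hs
    by_cases c : s = t + 1
    · subst c; rw [u1]; constructor <;> linarith
    · rw [u2 s c]; exact ⟨le_refl _, hle s hs⟩
  · show t + 1 < n + 2; omega
  · show y (t+1) < _; rw [hm]; push_cast; linarith
  · show _ < y' (t+1); rw [u1, hm]; push_cast; linarith
  · show y (t+1) + 1 ≤ y' (t+1); rw [u1]; linarith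

theorem stmtA_s5 (n i : ℕ) (k : ℤ) (hik : (i, k) ∈ XA n)
    (p p' : List (ℝ × ℝ)) (hp : p ∈ P (.A n) i k) (hp' : p' ∈ P (.A n) i k) :
    ∃ ms : List (Bool × (ℕ × ℤ)), MoveSeq (.A n) i k p' p ms ∧
      ∀ jl : ℕ × ℤ, ¬((true, jl) ∈ ms ∧ (false, jl) ∈ ms) :=
  generic (.A n) i k Prod.fst (n + 2) (fun r => (r : ℝ)) (GA n i k)
    (fun _ h => ⟨_, GA_of_mem h⟩) (fun _ _ => GA_min) (keyA n i k hik) p p' hp hp'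

/-- Heights of a spin path of type B. -/
def SpinF (n : ℕ) (ε : ℝ) (l : ℤ) (f : ℕ → ℝ) : Prop :=
  f 0 = (l : ℝ) + 2 * (n : ℝ) - 1 ∧
    (∀ r, r + 2 ≤ n → f (r + 1) - f r = 2 ∨ f (r + 1) - f r = -2) ∧
    (f n - f (n - 1) = 1 + ε ∨ f n - f (n - 1) = -(1 + ε))

theorem Spin_int {n : ℕ} {ε : ℝ} {l : ℤ} {f : ℕ → ℝ} (h : SpinF n ε l f) (r : ℕ) (hr : r < n) :
    ∃ m : ℤ, f r = ((l + 2 * n - 1 + 2 * r + 4 * m : ℤ) : ℝ) := by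
  induction r with
  | zero => exact ⟨0, by push_cast; rw [h.1]; ring⟩
  | succ r ih =>
    obtain ⟨m, hm⟩ := ih (by omega)
    rcases h.2.1 r (by omega) with e | e
    · exact ⟨m, by push_cast at hm ⊢; linarith⟩
    · exact ⟨m - 1, by push_cast at hm ⊢; linarith⟩

theorem Spin_cmp {n : ℕ} {ε : ℝ} {l : ℤ} {f g : ℕ → ℝ} (h : SpinF n ε l f) (h' : SpinF n ε l g)
    (r : ℕ) (hr : r < n) : f r = g r ∨ f r + 4 ≤ g r ∨ g r + 4 ≤ f r := by
  obtain ⟨m, hm⟩ := Spin_int h r hr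
  obtain ⟨m', hm'⟩ := Spin_int h' r hr
  rw [hm, hm']
  norm_cast
  omega

theorem Spin_min {n : ℕ} {ε : ℝ} {l : ℤ} {f g : ℕ → ℝ} (hn : 2 ≤ n) (e0 : 0 < ε) (e1 : ε < 1 / 2)
    (h : SpinF n ε l f) (h' : SpinF n ε l g) : SpinF n ε l (fun r => min (f r) (g r)) := by
  have aux : ∀ (r s : ℕ) (a : ℝ), r < n → 0 < a → a ≤ 2 →
      (f s - f r = a ∨ f s - f r = -a) → (g s - g r = a ∨ g s - g r = -a) →
      (min (f s) (g s) - min (f r) (g r) = a ∨ min (f s) (g s) - min (f r) (g r) = -a) := by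
    intro r s a hr ha ha2 s1 s2
    rcases Spin_cmp h h' r hr with c | c | c
    · rw [← c] at s2 ⊢
      rw [min_self]
      rcases min_choice (f s) (g s) with e | e <;> rw [e] <;> assumption
    · have : f s ≤ g s := by rcases s1 with s1 | s1 <;> rcases s2 with s2 | s2 <;> linarith
      rw [min_eq_left this, min_eq_left (by linarith)]; exact s1
    · have : g s ≤ f s := by rcases s1 with s1 | s1 <;> rcases s2 with s2 | s2 <;> linarith
      rw [min_eq_right this, min_eq_right (by linarith)]; exact s2
  refine ⟨?_, ?_, ?_⟩
  · simp [h.1, h'.1]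
  · intro r hr
    exact aux r (r+1) 2 (by omega) (by norm_num) le_rfl (h.2.1 r hr) (h'.2.1 r hr)
  · exact aux (n-1) n (1+ε) (by omega) (by linarith) (by linarith) h.2.2 h'.2.2

theorem spin_corner {n : ℕ} {ε : ℝ} {l : ℤ} {f g : ℕ → ℝ} (e0 : 0 < ε)
    (h : SpinF n ε l f) (h' : SpinF n ε l g) (hle : ∀ s ≤ n, f s ≤ g s) {r : ℕ} (hr : r < n)
    (hlt : f r < g r) (hmin : ∀ s ≤ n, f s < g s → f r ≤ f s) :
    1 ≤ r ∧ f (r - 1) = f r + 2 ∧ (r + 1 < n → f (r + 1) = f r + 2) ∧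
      (r + 1 = n → f n = f r + (1 + ε)) := by
  have hr0 : r ≠ 0 := by
    rintro rfl; rw [h.1, h'.1] at hlt; exact lt_irrefl _ hlt
  obtain ⟨t, rfl⟩ : ∃ t, r = t + 1 := ⟨r - 1, by omega⟩
  refine ⟨by omega, ?_, ?_, ?_⟩
  · rw [Nat.add_sub_cancel]
    rcases h.2.1 t (by omega) with e | e
    · exfalso
      have a : ¬ f t < g t := fun h => by linarith [hmin t (by omega) h]
      rcases h'.2.1 t (by omega) with e' | e' <;> linarith
    · linarith
  · intro hn
    rcases h.2.1 (t+1) (by omega) with e | e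
    · linarith
    · exfalso
      have a : ¬ f (t+1+1) < g (t+1+1) := fun h => by linarith [hmin (t+1+1) (by omega) h]
      rcases h'.2.1 (t+1) (by omega) with e' | e' <;> linarith [hle (t+1+1) (by omega)]
  · intro hn
    have h1 := h.2.2
    have h2 := h'.2.2
    have hn1 : n - 1 = t + 1 := by omega
    rw [hn1] at h1 h2
    rcases h1 with e | e
    · linarith
    · exfalso
      have a : ¬ f n < g n := fun h => by linarith [hmin n le_rfl h]
      rcases h2 with e' | e' <;> linarith [hle n le_rfl]

theorem spin_cornerN {n : ℕ} {ε : ℝ} {l : ℤ} {f g : ℕ → ℝ} (hn : 2 ≤ n) (e0 : 0 < ε)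
    (h : SpinF n ε l f) (h' : SpinF n ε l g) (hle : ∀ s ≤ n, f s ≤ g s)
    (hlt : f n < g n) (hmin : ∀ s ≤ n, f s < g s → f n ≤ f s) :
    f (n - 1) = f n + (1 + ε) := by
  rcases h.2.2 with e | e
  · exfalso
    have a : ¬ f (n-1) < g (n-1) := fun h => by linarith [hmin (n-1) (by omega) h]
    rcases h'.2.2 with e' | e' <;> linarith [hle (n-1) (by omega)]
  · linarith

theorem spin_lastN {n : ℕ} {ε : ℝ} {l : ℤ} {f g : ℕ → ℝ} (hn : 2 ≤ n) (e0 : 0 < ε)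
    (e1 : ε < 1 / 2) (h : SpinF n ε l f) (h' : SpinF n ε l g) (hle : ∀ s ≤ n, f s ≤ g s)
    (hlt : f n < g n) (hf : f (n - 1) = f n + (1 + ε)) : f n + 2 + 2 * ε ≤ g n := by
  have := hle (n-1) (by omega)
  rcases Spin_cmp h h' (n-1) (by omega) with c | c | c <;> rcases h'.2.2 with e | e <;> linarith

/-- The two (or one) halves of a path of type B. -/
structure Half (n : ℕ) (ε : ℝ) (L : ℕ) (x : ℕ → ℝ) (e : ℕ → ℕ) (l : ℤ) : Prop where
  hn : 2 ≤ n
  e0 : 0 < ε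
  e1 : ε < 1 / 2
  hl : l % 2 = 1
  hL : ∀ r ≤ n, e r < L
  inj : ∀ r s, r ≤ n → s ≤ n → e r = e s → r = s
  hx : ∀ r < n, x (e r) = if l % 4 = 3 then 2 * (r : ℝ) else 4 * (n : ℝ) - 2 - 2 * (r : ℝ)
  hxn : x (e n) = 2 * (n : ℝ) - 1
  adj : ∀ r, 1 ≤ r → r < n → 1 ≤ e r ∧ e r + 1 < L ∧
    ((e r - 1 = e (r - 1) ∧ e r + 1 = e (r + 1)) ∨ (e r - 1 = e (r + 1) ∧ e r + 1 = e (r - 1)))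
  uniq : ∀ r, 1 ≤ r → r < n → ∀ s < L, x s = x (e r) → s = e r

theorem iota_col {n : ℕ} {ε : ℝ} {L : ℕ} {x : ℕ → ℝ} {e : ℕ → ℕ} {l : ℤ}
    (H : Half n ε L x e l) {r : ℕ} (hr : r < n) {Y : ℤ}
    (hY : (Y - (l + 2 * n - 1 + 2 * r)) % 4 = 0) :
    ((iotaB n (r, Y)).1 : ℝ) = x (e r) ∧ (iotaB n (r, Y)).2 = Y ∧
    (iotaB n (r, Y)).1 = if l % 4 = 3 then 2 * (r : ℤ) else 4 * (n : ℤ) - 2 - 2 * (r : ℤ) := by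
  have hl := H.hl
  have hne : r ≠ n := by omega
  rw [H.hx r hr]
  simp only [iotaB, hne, if_false]
  by_cases c : l % 4 = 3
  · have : (2 * (n : ℤ) + Y - 2 * (r : ℤ)) % 4 = 2 := by omega
    simp [this, c]
  · have : ¬ (2 * (n : ℤ) + Y - 2 * (r : ℤ)) % 4 = 2 := by omega
    simp [this, c]

theorem cornerB {n : ℕ} {ε : ℝ} {L : ℕ} {x : ℕ → ℝ} {e : ℕ → ℕ} {l : ℤ}
    (H : Half n ε L x e l) {r : ℕ} (hr1 : 1 ≤ r) (hr : r < n) {Y : ℤ} {y : ℕ → ℝ}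
    (hY : (Y - (l + 2 * n - 1 + 2 * r)) % 4 = 0) (hyY : y (e r) = Y)
    (h1 : y (e r) < y (e (r - 1))) (h2 : y (e r) < y (e (r + 1))) :
    CanLower (.B n ε) (mkP L x y) r (Y + 2) ∧ (r, Y + 2) ∈ W (.B n ε) := by
  have hl := H.hl
  have hne : r ≠ n := by omega
  obtain ⟨i1, i2, i3⟩ := iota_col H hr hY
  obtain ⟨a1, a2, a3⟩ := H.adj r hr1 hr
  have hX : (r, Y) ∈ XB n := by
    right; exact ⟨hr1, hr, by show Y % 2 = 0; omega⟩
  have hrr : ((rr (.B n ε) r : ℕ) : ℤ) = 2 := by simp [rr, hne]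
  refine ⟨⟨?_, ?_⟩, ?_⟩
  · rw [hrr, add_sub_cancel_right]
    refine ⟨hX, Or.inl ⟨e r, a1, by rw [mkP_length]; exact a2, ?_, ?_, ?_, ?_, ?_⟩⟩
    · rw [pt_mkP (by omega), i1, i2, hyY]
    · rw [i3]; split_ifs <;> omega
    · rw [i3]; split_ifs <;> omega
    · rw [i3]; split_ifs <;> omega
    · rw [if_pos rfl, pt_mkP (by omega), pt_mkP (by omega), pt_mkP (by omega)]
      rcases a3 with ⟨b1, b2⟩ | ⟨b1, b2⟩ <;> rw [b1, b2]
      · exact ⟨h1, h2⟩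
      · exact ⟨h2, h1⟩
  · rw [hrr]
    rintro ⟨_, ⟨s, s1, s2, s3, _⟩ | ⟨s1, _⟩⟩
    · obtain ⟨j1, j2, j3⟩ := iota_col H hr (Y := Y + 2 + 2) (by omega)
      rw [mkP_length] at s2
      rw [pt_mkP (by omega), j1, j2, Prod.mk.injEq] at s3
      have := H.uniq r hr1 hr s (by omega) s3.1
      rw [this, hyY] at s3
      have := s3.2
      push_cast at this
      linarith
    · exact hne s1
  · show (r, Y + 2 - _) ∈ XB n
    rw [show (((rr (.B n ε) (r, Y+2).1) : ℕ) : ℤ) = 2 from hrr, add_sub_cancel_right]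
    exact hX

theorem moveLow {n : ℕ} {ε : ℝ} {L : ℕ} {x : ℕ → ℝ} {e : ℕ → ℕ} {l : ℤ}
    (H : Half n ε L x e l) {i : ℕ} {k : ℤ} {pos : ℕ × ℤ → ℕ} {G : (ℕ → ℝ) → Prop}
    (hmem : ∀ y, G y → mkP L x y ∈ pathsB n ε i k)
    (hpos : ∀ (j : ℕ) (s : ℤ), 1 ≤ j → j ≤ n → (s - (l + 2 * n + 1 + 2 * j)) % 4 = 0 →
      pos (j, s) = e j) {y z : ℕ → ℝ} (hGy : G y)
    (hy : SpinF n ε l (fun r => y (e r))) (hz : SpinF n ε l (fun r => z (e r)))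
    (hle : ∀ r < L, y r ≤ z r) {r : ℕ} (hr : r < n) (hr1 : 1 ≤ r)
    (c1 : y (e (r - 1)) = y (e r) + 2) (c2 : r + 1 < n → y (e (r + 1)) = y (e r) + 2)
    (c3 : r + 1 = n → y (e n) = y (e r) + (1 + ε)) (hlt : y (e r) < z (e r))
    (hG : ∀ y', SpinF n ε l (fun r => y' (e r)) → (∀ s, (∀ t ≤ n, s ≠ e t) → y' s = y s) →
      (y' (e n) = y (e n) ∨
        (y (e n) = y (e (n - 1)) + (1 + ε) ∧ y' (e n) = y (e n) + 2 - 2 * ε)) → G y') :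
    Concl (.B n ε) i k pos L x G y z := by
  have hn := H.hn
  have e0 := H.e0
  have e1 := H.e1
  obtain ⟨m, hm⟩ := Spin_int hy r hr
  set Y : ℤ := l + 2 * n - 1 + 2 * r + 4 * m with hYd
  have hm : y (e r) = Y := hm
  have hY : (Y - (l + 2 * n - 1 + 2 * r)) % 4 = 0 := by omega
  have hd : y (e r) + 4 ≤ z (e r) := by
    rcases Spin_cmp hy hz r hr with c | c | c <;> linarith
  obtain ⟨i1, i2, i3⟩ := iota_col H hr hY
  have hne : r ≠ n := by omega
  have hp : pos (r, Y + 2) = e r := hpos r (Y + 2) hr1 (by omega) (by omega)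
  have c4 : y (e r) < y (e (r + 1)) := by
    rcases Nat.lt_or_ge (r+1) n with h | h
    · rw [c2 h]; linarith
    · have h : r + 1 = n := by omega
      rw [h, c3 h]; linarith
  obtain ⟨hcl, hW⟩ := cornerB H hr1 hr hY hm (by linarith) c4
  by_cases hrn : r + 1 < n
  · set y' := Function.update y (e r) (y (e r) + 4) with hy'
    have u1 : y' (e r) = y (e r) + 4 := by simp [hy']
    have u2 : ∀ s, s ≠ e r → y' s = y s := by intro s hs; simp [hy', hs]
    have u3 : ∀ s, s ≤ n → s ≠ r → y' (e s) = y (e s) := by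
      intro s hs hne; exact u2 _ (fun h => hne (H.inj s r hs (by omega) h))
    have hS : SpinF n ε l (fun r => y' (e r)) := by
      refine ⟨?_, ?_, ?_⟩
      · show y' (e 0) = _; rw [u3 0 (by omega) (by omega)]; exact hy.1
      · intro s hs
        show y' (e (s+1)) - y' (e s) = 2 ∨ y' (e (s+1)) - y' (e s) = -2
        by_cases d1 : s = r
        · subst d1; rw [u1, u3 _ (by omega) (by omega)]; right; linarith [c2 hrn]
        · by_cases d2 : s + 1 = r
          · subst d2; rw [u1, u3 _ (by omega) (by omega)]; left
            rw [Nat.add_sub_cancel] at c1; linarith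
          · rw [u3 _ (by omega) d1, u3 _ (by omega) d2]; exact hy.2.1 s hs
      · show y' (e n) - y' (e (n-1)) = _ ∨ y' (e n) - y' (e (n-1)) = _
        rw [u3 _ (by omega) (by omega), u3 _ (by omega) (by omega)]; exact hy.2.2
    have hGy' : G y' := hG y' hS (fun s hs => u2 s (hs r (by omega)))
      (Or.inl (u3 n le_rfl (by omega)))
    refine ⟨(r, Y + 2), hW, y', hGy', ⟨hmem _ hGy, hmem _ hGy', hcl, ?_⟩, ?_, ?_, ?_, ?_, ?_⟩
    · show (if r = n then _ else if r = n - 1 then _ else _)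
      rw [if_neg hne, if_neg (by omega)]
      simp only [add_sub_cancel_right]
      rw [i1]
      have hL := H.hL r (by omega)
      refine ⟨e r, by rw [mkP_length]; exact hL, ?_, by simp [mkP_length], ?_, ?_⟩
      · rw [pt_mkP hL, hm]; simp
      · rw [pt_mkP hL, u1, hm]; push_cast; ring_nf
      · intro s hs hne
        rw [mkP_length] at hs
        rw [pt_mkP hs, pt_mkP hs, u2 s hne]
    · intro s hs
      by_cases c : s = e r
      · subst c; rw [u1]; constructor <;> linarith
      · rw [u2 s c]; exact ⟨le_refl _, hle s hs⟩
    · rw [hp]; exact H.hL r (by omega)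
    · rw [hp, hm]; push_cast; linarith
    · rw [hp, u1, hm]; push_cast; linarith
    · rw [hp, u1]; linarith
  · have hrn : r + 1 = n := by omega
    have c3 := c3 hrn
    have hr' : n - 1 = r := by omega
    have hee : e n ≠ e r := fun h => hne (H.inj n r le_rfl (by omega) h).symm
    set y' := Function.update (Function.update y (e r) (y (e r) + 4)) (e n)
      (y (e n) + 2 - 2 * ε) with hy'
    have u0 : y' (e n) = y (e n) + 2 - 2 * ε := by simp [hy']
    have u1 : y' (e r) = y (e r) + 4 := by simp [hy', hee.symm]
    have u2 : ∀ s, s ≠ e r → s ≠ e n → y' s = y s := by intro s hs hs'; simp [hy', hs, hs']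
    have u3 : ∀ s, s < n → s ≠ r → y' (e s) = y (e s) := by
      intro s hs hne
      exact u2 _ (fun h => hne (H.inj s r (by omega) (by omega) h))
        (fun h => absurd (H.inj s n (by omega) le_rfl h) (by omega))
    have hS : SpinF n ε l (fun r => y' (e r)) := by
      refine ⟨?_, ?_, ?_⟩
      · show y' (e 0) = _; rw [u3 0 (by omega) (by omega)]; exact hy.1
      · intro s hs
        show y' (e (s+1)) - y' (e s) = 2 ∨ y' (e (s+1)) - y' (e s) = -2
        by_cases d2 : s + 1 = r
        · subst d2; rw [u1, u3 _ (by omega) (by omega)]; left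
          rw [Nat.add_sub_cancel] at c1; linarith
        · rw [u3 s (by omega) (by omega), u3 _ (by omega) d2]; exact hy.2.1 s hs
      · show y' (e n) - y' (e (n-1)) = _ ∨ y' (e n) - y' (e (n-1)) = _
        rw [hr', u0, u1]; right; linarith
    have hGy' : G y' := hG y' hS (fun s hs => u2 s (hs r (by omega)) (hs n le_rfl))
      (Or.inr ⟨by rw [hr']; exact c3, u0⟩)
    have hzn : y (e n) + 2 - 2 * ε ≤ z (e n) := by
      have := hz.2.2
      simp only [hr'] at this
      rcases this with h | h <;> linarith
    refine ⟨(r, Y + 2), hW, y', hGy', ⟨hmem _ hGy, hmem _ hGy', hcl, ?_⟩, ?_, ?_, ?_, ?_, ?_⟩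
    · show (if r = n then _ else if r = n - 1 then _ else _)
      rw [if_neg hne, if_pos (by omega)]
      simp only [add_sub_cancel_right]
      rw [i1]
      have hL := H.hL r (by omega)
      have hLn := H.hL n le_rfl
      refine ⟨e r, e n, by rw [mkP_length]; exact hL, by rw [mkP_length]; exact hLn, hee.symm,
        ?_, ?_, by simp [mkP_length], ?_, ?_, ?_⟩
      · rw [pt_mkP hL, hm]; simp
      · rw [pt_mkP hLn, H.hxn, c3, hm]; push_cast; ring_nf
      · rw [pt_mkP hL, u1, hm]; push_cast; ring_nf
      · rw [pt_mkP hLn, H.hxn, u0, c3, hm]; push_cast; ring_nf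
      · intro s hs hne hne'
        rw [mkP_length] at hs
        rw [pt_mkP hs, pt_mkP hs, u2 s hne hne']
    · intro s hs
      by_cases c : s = e r
      · subst c; rw [u1]; constructor <;> linarith
      · by_cases c' : s = e n
        · subst c'; rw [u0]; constructor <;> linarith
        · rw [u2 s c c']; exact ⟨le_refl _, hle s hs⟩
    · rw [hp]; exact H.hL r (by omega)
    · rw [hp, hm]; push_cast; linarith
    · rw [hp, u1, hm]; push_cast; linarith
    · rw [hp, u1]; linarith

theorem moveN {n : ℕ} {ε : ℝ} {L : ℕ} {x : ℕ → ℝ} {e : ℕ → ℕ} {l : ℤ}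
    (H : Half n ε L x e l) {i : ℕ} {k : ℤ} {pos : ℕ × ℤ → ℕ} {G : (ℕ → ℝ) → Prop}
    (hmem : ∀ y, G y → mkP L x y ∈ pathsB n ε i k)
    (hpos : ∀ (j : ℕ) (s : ℤ), 1 ≤ j → j ≤ n → (s - (l + 2 * n + 1 + 2 * j)) % 4 = 0 →
      pos (j, s) = e j) {y z : ℕ → ℝ} (hGy : G y)
    (hy : SpinF n ε l (fun r => y (e r))) (hz : SpinF n ε l (fun r => z (e r)))
    (hle : ∀ r < L, y r ≤ z r)
    (c1 : y (e (n - 1)) = y (e n) + (1 + ε)) (hlt : y (e n) < z (e n))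
    (b1 : ∀ s < L, x s = 2 * (n : ℝ) - 1 → y s ≠ y (e n) + 2 * ε)
    (b2 : ∀ s < L, x s = 2 * (n : ℝ) - 1 → y s ≠ y (e n) + 2)
    (hG : ∀ y', SpinF n ε l (fun r => y' (e r)) → (∀ s, (∀ t ≤ n, s ≠ e t) → y' s = y s) →
      y' (e n) = y (e n) + 2 + 2 * ε → G y') :
    Concl (.B n ε) i k pos L x G y z := by
  have hn := H.hn
  have e0 := H.e0
  have e1 := H.e1
  have hl := H.hl
  obtain ⟨m, hm⟩ := Spin_int hy (n-1) (by omega)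
  set Y : ℤ := l + 2 * n - 1 + 2 * (n - 1 : ℕ) + 4 * m with hYd
  have hm : y (e (n-1)) = Y := hm
  have hyn : y (e n) = Y - 1 - ε := by linarith
  have hd : y (e n) + 2 + 2 * ε ≤ z (e n) :=
    spin_lastN (f := fun r => y (e r)) (g := fun r => z (e r)) hn e0 e1 hy hz (fun s hs => hle _ (H.hL s hs)) hlt c1
  have hp : pos (n, Y) = e n := hpos n Y (by omega) le_rfl (by omega)
  have hLn := H.hL n le_rfl
  set y' := Function.update y (e n) (y (e n) + 2 + 2 * ε) with hy'
  have u1 : y' (e n) = y (e n) + 2 + 2 * ε := by simp [hy']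
  have u2 : ∀ s, s ≠ e n → y' s = y s := by intro s hs; simp [hy', hs]
  have u3 : ∀ s, s < n → y' (e s) = y (e s) := by
    intro s hs; exact u2 _ (fun h => absurd (H.inj s n (by omega) le_rfl h) (by omega))
  have hS : SpinF n ε l (fun r => y' (e r)) := by
    refine ⟨?_, ?_, ?_⟩
    · show y' (e 0) = _; rw [u3 0 (by omega)]; exact hy.1
    · intro s hs
      show y' (e (s+1)) - y' (e s) = 2 ∨ y' (e (s+1)) - y' (e s) = -2
      rw [u3 _ (by omega), u3 _ (by omega)]; exact hy.2.1 s hs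
    · show y' (e n) - y' (e (n-1)) = _ ∨ y' (e n) - y' (e (n-1)) = _
      rw [u1, u3 _ (by omega)]; left; linarith
  have hGy' : G y' := hG y' hS (fun s hs => u2 s (hs n le_rfl)) u1
  have hrr : ((rr (.B n ε) n : ℕ) : ℤ) = 1 := by simp [rr]
  have hX : (n, Y - 1) ∈ XB n := by
    left; exact ⟨rfl, by show (Y - 1) % 2 = 1; omega⟩
  refine ⟨(n, Y), ?_, y', hGy', ⟨hmem _ hGy, hmem _ hGy', ⟨?_, ?_⟩, ?_⟩, ?_, ?_, ?_, ?_, ?_⟩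
  · show (n, Y - _) ∈ XB n
    rw [show (((rr (.B n ε) (n, Y).1) : ℕ) : ℤ) = 1 from hrr]
    exact hX
  · rw [hrr]
    refine ⟨hX, Or.inr ⟨rfl, ?_⟩⟩
    rw [if_pos rfl]
    constructor
    · rw [mem_mkP]
      exact ⟨e n, hLn, H.hxn, by rw [hyn]; push_cast; ring⟩
    · rw [mem_mkP]
      rintro ⟨s, s1, s2, s3⟩
      apply b1 s s1 s2
      rw [s3, hyn]; push_cast; ring
  · rw [hrr]
    rintro ⟨_, ⟨s, s1, s2, s3, _, h, _⟩ | ⟨_, h⟩⟩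
    · apply h; simp [iotaB]
    · rw [if_pos rfl, mem_mkP] at h
      obtain ⟨⟨s, s1, s2, s3⟩, _⟩ := h
      apply b2 s s1 s2
      rw [s3, hyn]; push_cast; ring
  · show (if n = n then _ else _)
    rw [if_pos rfl]
    refine ⟨e n, by rw [mkP_length]; exact hLn, ?_, by simp [mkP_length], ?_, ?_⟩
    · rw [pt_mkP hLn, H.hxn, hyn]
    · rw [pt_mkP hLn, H.hxn, u1, hyn]; simp only; ring_nf
    · intro s hs hne
      rw [mkP_length] at hs
      rw [pt_mkP hs, pt_mkP hs, u2 s hne]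
  · intro s hs
    by_cases c : s = e n
    · subst c; rw [u1]; constructor <;> linarith
    · rw [u2 s c]; exact ⟨le_refl _, hle s hs⟩
  · rw [hp]; exact hLn
  · rw [hp, hyn]; simp only; linarith
  · rw [hp, u1, hyn]; simp only; linarith
  · rw [hp, u1]; linarith

/-- Columns of a spin path. -/
noncomputable def xsp (n : ℕ) (l : ℤ) (r : ℕ) : ℝ :=
  if r < n then (if l % 4 = 3 then 2 * (r : ℝ) else 4 * (n : ℝ) - 2 - 2 * (r : ℝ))
  else 2 * (n : ℝ) - 1

/-- Integer columns of a spin path. -/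
def xspZ (n : ℕ) (l : ℤ) (r : ℕ) : ℤ :=
  if r < n then (if l % 4 = 3 then 2 * (r : ℤ) else 4 * (n : ℤ) - 2 - 2 * (r : ℤ))
  else 2 * (n : ℤ) - 1

theorem xsp_cast (n : ℕ) (l : ℤ) (r : ℕ) : xsp n l r = (xspZ n l r : ℝ) := by
  unfold xsp xspZ
  split_ifs <;> push_cast <;> rfl

theorem xsp_last (n : ℕ) (l : ℤ) : xsp n l n = 2 * (n : ℝ) - 1 := by simp [xsp]

theorem spin_mem {n : ℕ} {ε : ℝ} {l : ℤ} {y : ℕ → ℝ} (hn : 2 ≤ n) (h : SpinF n ε l y) :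
    mkP (n + 1) (xsp n l) y ∈ pathsBspin n ε l := by
  refine ⟨mkP_length _ _ _, ?_, ?_, ?_, ?_, ?_⟩
  · split_ifs with c
    · intro r hr; rw [pt_mkP (by omega)]; simp [xsp, hr, c]
    · intro r hr; rw [pt_mkP (by omega)]; simp [xsp, hr, c]
  · rw [pt_mkP (by omega)]; exact xsp_last n l
  · rw [pt_mkP (by omega)]; exact h.1
  · intro r hr; rw [pt_mkP (by omega), pt_mkP (by omega)]; exact h.2.1 r hr
  · rw [pt_mkP (by omega), pt_mkP (by omega)]; exact h.2.2

theorem spin_of_mem {n : ℕ} {ε : ℝ} {l : ℤ} {p : List (ℝ × ℝ)} (h : p ∈ pathsBspin n ε l) :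
    SpinF n ε l (fun r => (pt p r).2) ∧ p = mkP (n + 1) (xsp n l) (fun r => (pt p r).2) := by
  obtain ⟨h1, h2, h3, h4, h5, h6⟩ := h
  refine ⟨⟨h4, h5, h6⟩, eq_mkP h1 ?_⟩
  intro r hr
  unfold xsp
  by_cases c : r < n
  · rw [if_pos c]
    split_ifs at h2 ⊢ with d
    · exact h2 r c
    · exact h2 r c
  · have : r = n := by omega
    rw [if_neg c, this, h3]

theorem half_spin {n : ℕ} {ε : ℝ} {l : ℤ} (hn : 2 ≤ n) (e0 : 0 < ε) (e1 : ε < 1 / 2)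
    (hl : l % 2 = 1) : Half n ε (n + 1) (xsp n l) (fun r => r) l where
  hn := hn
  e0 := e0
  e1 := e1
  hl := hl
  hL := by intro r hr; show r < n + 1; omega
  inj := by intro r s _ _ h; exact h
  hx := by intro r hr; simp [xsp, hr]
  hxn := xsp_last n l
  adj := by intro r h1 h2; refine ⟨h1, ?_, Or.inl ⟨rfl, rfl⟩⟩; show r + 1 < n + 1; omega
  uniq := by
    intro r h1 h2 s hs h
    show s = r
    rw [xsp_cast, xsp_cast] at h
    have h : xspZ n l s = xspZ n l r := by exact_mod_cast h
    unfold xspZ at h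
    split_ifs at h <;> omega

theorem stmtBspin (n : ℕ) (ε : ℝ) (k : ℤ) (hn : 2 ≤ n) (e0 : 0 < ε) (e1 : ε < 1 / 2)
    (hk : k % 2 = 1)
    (p p' : List (ℝ × ℝ)) (hp : p ∈ P (.B n ε) n k) (hp' : p' ∈ P (.B n ε) n k) :
    ∃ ms : List (Bool × (ℕ × ℤ)), MoveSeq (.B n ε) n k p' p ms ∧
      ∀ jl : ℕ × ℤ, ¬((true, jl) ∈ ms ∧ (false, jl) ∈ ms) := by
  have hPe : P (.B n ε) n k = pathsBspin n ε k := by simp [P, pathsB]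
  refine generic (.B n ε) n k Prod.fst (n + 1) (xsp n k) (SpinF n ε k) ?_ ?_ ?_ p p' hp hp'
  · intro p h
    rw [hPe] at h
    exact ⟨_, spin_of_mem h⟩
  · intro y z hy hz
    exact Spin_min hn e0 e1 hy hz
  · intro y z hy hz hle hlt0
    obtain ⟨r, hr, hlt, hmin⟩ := exists_min_pos hlt0
    have H := half_spin (ε := ε) hn e0 e1 hk
    have hmem : ∀ y, SpinF n ε k y → mkP (n + 1) (xsp n k) y ∈ pathsB n ε n k := by
      intro y hy
      have := spin_mem hn hy
      simpa [pathsB] using this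
    by_cases c : r < n
    · obtain ⟨a1, a2, a3, a4⟩ := spin_corner e0 hy hz (fun s hs => hle s (by omega)) c hlt
        (fun s hs => hmin s (by omega))
      exact moveLow H hmem (fun _ _ _ _ _ => rfl) hy hy hz hle c a1 a2 a3 a4 hlt
        (fun y' h _ _ => h)
    · have : r = n := by omega
      subst this
      have a1 := spin_cornerN hn e0 hy hz (fun s hs => hle s (by omega)) hlt
        (fun s hs => hmin s (by omega))
      have hs : ∀ s < r + 1, xsp r k s = 2 * (r : ℝ) - 1 → s = r := by
        intro s hs h
        rw [xsp_cast] at h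
        have h : xspZ r k s = 2 * (r : ℤ) - 1 := by exact_mod_cast h
        unfold xspZ at h
        split_ifs at h <;> omega
      refine moveN H hmem (fun _ _ _ _ _ => rfl) hy hy hz hle a1 hlt ?_ ?_ (fun y' h _ _ => h)
      · intro s h1 h2 h3
        rw [hs s h1 h2] at h3
        linarith
      · intro s h1 h2 h3
        rw [hs s h1 h2] at h3
        linarith

theorem mkP_append (n : ℕ) (xa xb ya yb : ℕ → ℝ) :
    mkP (n + 1) xa ya ++ (mkP (n + 1) xb yb).reverse =
    mkP (2 * n + 2) (fun r => if r ≤ n then xa r else xb (2 * n + 1 - r))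
      (fun r => if r ≤ n then ya r else yb (2 * n + 1 - r)) := by
  apply List.ext_getElem
  · simp [mkP_length]; omega
  · intro r h1 h2
    rw [mkP_length] at h2
    rw [List.getElem_append]
    by_cases c : r ≤ n
    · have : r < (mkP (n+1) xa ya).length := by rw [mkP_length]; omega
      rw [dif_pos this]
      simp [mkP, c]
    · have : ¬ r < (mkP (n+1) xa ya).length := by rw [mkP_length]; omega
      rw [dif_neg this, List.getElem_reverse]
      have e : n - (r - (n + 1)) = 2 * n + 1 - r := by omega
      simp [mkP, c, e]

/-- Columns of a non-spin path of type B. -/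
noncomputable def xns (n : ℕ) (la lb : ℤ) (r : ℕ) : ℝ :=
  if r ≤ n then xsp n la r else xsp n lb (2 * n + 1 - r)

/-- Integer columns of a non-spin path of type B. -/
def xnsZ (n : ℕ) (la lb : ℤ) (r : ℕ) : ℤ :=
  if r ≤ n then xspZ n la r else xspZ n lb (2 * n + 1 - r)

theorem xns_cast (n : ℕ) (la lb : ℤ) (r : ℕ) : xns n la lb r = (xnsZ n la lb r : ℝ) := by
  unfold xns xnsZ
  split_ifs <;> exact xsp_cast _ _ _

/-- Heights of a non-spin path of type B. -/
def GN (n : ℕ) (ε : ℝ) (la lb : ℤ) (y : ℕ → ℝ) : Prop :=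
  SpinF n ε la y ∧ SpinF n ε lb (fun r => y (2 * n + 1 - r)) ∧ y (n + 1) < y n

theorem half_a {n : ℕ} {ε : ℝ} {la lb : ℤ} (hn : 2 ≤ n) (e0 : 0 < ε) (e1 : ε < 1 / 2)
    (ha : la % 2 = 1) (hab : (lb - la) % 4 = 2) :
    Half n ε (2 * n + 2) (xns n la lb) (fun r => r) la where
  hn := hn
  e0 := e0
  e1 := e1
  hl := ha
  hL := by intro r hr; show r < 2 * n + 2; omega
  inj := by intro r s _ _ h; exact h
  hx := by intro r hr; simp [xns, xsp, hr, hr.le]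
  hxn := by simp [xns, xsp_last]
  adj := by intro r h1 h2; refine ⟨h1, ?_, Or.inl ⟨rfl, rfl⟩⟩; show r + 1 < 2 * n + 2; omega
  uniq := by
    intro r h1 h2 s hs h
    show s = r
    rw [xns_cast, xns_cast] at h
    have h : xnsZ n la lb s = xnsZ n la lb r := by exact_mod_cast h
    unfold xnsZ xspZ at h
    split_ifs at h <;> omega

theorem half_b {n : ℕ} {ε : ℝ} {la lb : ℤ} (hn : 2 ≤ n) (e0 : 0 < ε) (e1 : ε < 1 / 2)
    (ha : la % 2 = 1) (hab : (lb - la) % 4 = 2) :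
    Half n ε (2 * n + 2) (xns n la lb) (fun r => 2 * n + 1 - r) lb where
  hn := hn
  e0 := e0
  e1 := e1
  hl := by omega
  hL := by intro r hr; show 2 * n + 1 - r < 2 * n + 2; omega
  inj := by intro r s _ _ h; omega
  hx := by
    intro r hr
    have h1 : ¬ 2 * n + 1 - r ≤ n := by omega
    have h2 : 2 * n + 1 - (2 * n + 1 - r) = r := by omega
    simp only [xns, h1, if_false, h2]
    simp [xsp, hr]
  hxn := by
    have h1 : ¬ 2 * n + 1 - n ≤ n := by omega
    have h2 : 2 * n + 1 - (2 * n + 1 - n) = n := by omega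
    simp only [xns, h1, if_false, h2]
    exact xsp_last n lb
  adj := by
    intro r h1 h2
    refine ⟨?_, ?_, Or.inr ⟨?_, ?_⟩⟩ <;> omega
  uniq := by
    intro r h1 h2 s hs h
    show s = 2 * n + 1 - r
    rw [xns_cast, xns_cast] at h
    have h : xnsZ n la lb s = xnsZ n la lb (2 * n + 1 - r) := by exact_mod_cast h
    unfold xnsZ xspZ at h
    split_ifs at h <;> omega

theorem xns_center {n : ℕ} {la lb : ℤ} (s : ℕ) (hs : s < 2 * n + 2)
    (h : xns n la lb s = 2 * (n : ℝ) - 1) : s = n ∨ s = n + 1 := by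
  rw [xns_cast] at h
  have h : xnsZ n la lb s = 2 * (n : ℤ) - 1 := by exact_mod_cast h
  unfold xnsZ xspZ at h
  split_ifs at h <;> omega

/-- The position in the path of a move at a given site. -/
def posN (n : ℕ) (la : ℤ) (jl : ℕ × ℤ) : ℕ :=
  if (jl.2 - (la + 2 * n + 1 + 2 * jl.1)) % 4 = 0 then jl.1 else 2 * n + 1 - jl.1

theorem int_cases (a : ℤ) : a ≤ -2 ∨ a = -1 ∨ a = 0 ∨ 1 ≤ a := by omega

theorem keyN (n : ℕ) (ε : ℝ) (i : ℕ) (k la lb : ℤ) (hn : 2 ≤ n) (e0 : 0 < ε) (e1 : ε < 1 / 2)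
    (ha : la % 2 = 1) (hab : (lb - la) % 4 = 2)
    (hmem : ∀ y, GN n ε la lb y → mkP (2 * n + 2) (xns n la lb) y ∈ pathsB n ε i k)
    (y z : ℕ → ℝ) (hy : GN n ε la lb y) (hz : GN n ε la lb z)
    (hle : ∀ r < 2 * n + 2, y r ≤ z r) (hlt : ∃ r < 2 * n + 2, y r < z r) :
    Concl (.B n ε) i k (posN n la) (2 * n + 2) (xns n la lb) (GN n ε la lb) y z := by
  obtain ⟨r, hr, hlt, hmin⟩ := exists_min_pos hlt
  have Ha := half_a (ε := ε) hn e0 e1 ha hab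
  have Hb := half_b (ε := ε) hn e0 e1 ha hab
  have en : 2 * n + 1 - n = n + 1 := by omega
  have posa : ∀ (j : ℕ) (s : ℤ), 1 ≤ j → j ≤ n → (s - (la + 2 * n + 1 + 2 * j)) % 4 = 0 →
      posN n la (j, s) = j := by
    intro j s _ _ h; simp [posN, h]
  have posb : ∀ (j : ℕ) (s : ℤ), 1 ≤ j → j ≤ n → (s - (lb + 2 * n + 1 + 2 * j)) % 4 = 0 →
      posN n la (j, s) = 2 * n + 1 - j := by
    intro j s _ _ h
    have : ¬ (s - (la + 2 * n + 1 + 2 * j)) % 4 = 0 := by omega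
    simp [posN, this]
  -- rechecking membership after a move on the first half
  have hGa : ∀ y', SpinF n ε la y' → (∀ s, (∀ t ≤ n, s ≠ t) → y' s = y s) → y n ≤ y' n →
      GN n ε la lb y' := by
    intro y' h1 h2 h3
    have h4 : ∀ t ≤ n, y' (2 * n + 1 - t) = y (2 * n + 1 - t) := by
      intro t ht; exact h2 _ (fun u hu => by omega)
    refine ⟨h1, ⟨?_, ?_, ?_⟩, ?_⟩
    · show y' (2 * n + 1 - 0) = _; rw [h4 0 (by omega)]; exact hy.2.1.1
    · intro s hs
      show y' (2 * n + 1 - (s+1)) - y' (2 * n + 1 - s) = 2 ∨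
        y' (2 * n + 1 - (s+1)) - y' (2 * n + 1 - s) = -2
      rw [h4 _ (by omega), h4 _ (by omega)]; exact hy.2.1.2.1 s hs
    · show y' (2 * n + 1 - n) - y' (2 * n + 1 - (n-1)) = _ ∨
        y' (2 * n + 1 - n) - y' (2 * n + 1 - (n-1)) = _
      rw [h4 _ (by omega), h4 _ (by omega)]; exact hy.2.1.2.2
    · have := h4 n le_rfl
      rw [en] at this
      rw [this]; linarith [hy.2.2]
  have hGb : ∀ y', SpinF n ε lb (fun r => y' (2 * n + 1 - r)) →
      (∀ s, (∀ t ≤ n, s ≠ 2 * n + 1 - t) → y' s = y s) → y' (n + 1) < y n →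
      GN n ε la lb y' := by
    intro y' h1 h2 h3
    have h4 : ∀ t ≤ n, y' t = y t := by
      intro t ht; exact h2 _ (fun u hu => by omega)
    refine ⟨⟨?_, ?_, ?_⟩, h1, ?_⟩
    · rw [h4 0 (by omega)]; exact hy.1.1
    · intro s hs
      rw [h4 _ (by omega), h4 _ (by omega)]; exact hy.1.2.1 s hs
    · rw [h4 _ (by omega), h4 _ (by omega)]; exact hy.1.2.2
    · rw [h4 n le_rfl]; exact h3
  have hmoveNa : y (n - 1) = y n + (1 + ε) → y n < z n →
      Concl (.B n ε) i k (posN n la) (2 * n + 2) (xns n la lb) (GN n ε la lb) y z := by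
    intro a1 hlt
    refine moveN Ha hmem posa hy hy.1 hz.1 hle a1 hlt ?_ ?_ ?_
    · intro s h1 h2 h3
      rcases xns_center s h1 h2 with rfl | rfl <;> linarith [hy.2.2]
    · intro s h1 h2 h3
      rcases xns_center s h1 h2 with rfl | rfl <;> linarith [hy.2.2]
    · intro y' h1 h2 h3
      exact hGa y' h1 h2 (by linarith)
  have hleb : ∀ s ≤ n, y (2 * n + 1 - s) ≤ z (2 * n + 1 - s) := fun s hs => hle _ (by omega)
  -- relation between the two halves
  have hrel : ∃ m : ℤ, y (n - 1) = y (2 * n + 1 - (n - 1)) + 2 + 4 * m := by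
    obtain ⟨m1, h1⟩ := Spin_int hy.1 (n-1) (by omega)
    obtain ⟨m2, h2⟩ := Spin_int hy.2.1 (n-1) (by omega)
    obtain ⟨d, hd⟩ : ∃ d, lb - la = 4 * d + 2 := ⟨(lb - la) / 4, by omega⟩
    have hlb : lb = la + 4 * d + 2 := by omega
    refine ⟨m1 - m2 - d - 1, ?_⟩
    rw [h1, h2, hlb]
    push_cast
    ring
  obtain ⟨m, hrel⟩ := hrel
  have hlastA := hy.1.2.2
  have hlastB := hy.2.1.2.2
  have hlt0 := hy.2.2
  simp only [en] at hlastB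
  have mcase : (m : ℝ) ≤ -2 ∨ m = -1 ∨ m = 0 ∨ 1 ≤ (m : ℝ) := by
    rcases int_cases m with h | h | h | h
    · left; exact_mod_cast h
    · right; left; exact h
    · right; right; left; exact h
    · right; right; right; exact_mod_cast h
  by_cases c : r ≤ n
  · rcases Nat.lt_or_ge r n with c | c
    · obtain ⟨a1, a2, a3, a4⟩ := spin_corner e0 hy.1 hz.1 (fun s hs => hle s (by omega)) c hlt
        (fun s hs => hmin s (by omega))
      refine moveLow Ha hmem posa hy hy.1 hz.1 hle c a1 a2 a3 a4 hlt ?_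
      intro y' h1 h2 h3
      refine hGa y' h1 h2 ?_
      rcases h3 with h3 | ⟨_, h3⟩
      · exact h3.ge
      · linarith
    · have : r = n := by omega
      rw [this] at hlt hmin
      exact hmoveNa (spin_cornerN hn e0 hy.1 hz.1 (fun s hs => hle s (by omega)) hlt
        (fun s hs => hmin s (by omega))) hlt
  · obtain ⟨t, ht, rfl⟩ : ∃ t ≤ n, r = 2 * n + 1 - t := ⟨2 * n + 1 - r, by omega, by omega⟩
    rcases Nat.lt_or_ge t n with c | c
    · obtain ⟨a1, a2, a3, a4⟩ := spin_corner e0 hy.2.1 hz.2.1 hleb c hlt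
        (fun s hs => hmin _ (by omega))
      refine moveLow Hb hmem posb hy hy.2.1 hz.2.1 hle c a1 a2 a3 a4 hlt ?_
      intro y' h1 h2 h3
      refine hGb y' h1 h2 ?_
      simp only [en] at h3
      rcases h3 with h3 | ⟨h3, h4⟩
      · rw [h3]; exact hlt0
      · rcases mcase with h | h | h | h
        · rcases hlastA with q | q <;> linarith
        · rw [h] at hrel; push_cast at hrel; rcases hlastA with q | q <;> linarith
        · rw [h] at hrel; push_cast at hrel; rcases hlastA with q | q <;> linarith
        · rcases hlastA with q | q <;> linarith
    · have : t = n := by omega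
      rw [this, en] at hlt hmin
      have a1 := spin_cornerN (f := fun r => y (2 * n + 1 - r)) (g := fun r => z (2 * n + 1 - r))
        hn e0 hy.2.1 hz.2.1 hleb (by simp only [en]; exact hlt)
        (fun s hs => by simp only [en]; exact hmin _ (by omega))
      have a2 := spin_lastN (f := fun r => y (2 * n + 1 - r)) (g := fun r => z (2 * n + 1 - r))
        hn e0 e1 hy.2.1 hz.2.1 hleb (by simp only [en]; exact hlt) a1
      simp only [en] at a1 a2
      have hzlt := hz.2.2
      have hzlast := hz.1.2.2
      have hb1 : y n ≠ y (n + 1) + 2 * ε := by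
        intro h
        have hw : y (n - 1) < y (n + 1) := by
          rcases mcase with h | h | h | h
          · rcases hlastA with q | q <;> linarith
          · rw [h] at hrel; push_cast at hrel; rcases hlastA with q | q <;> linarith
          · rw [h] at hrel; push_cast at hrel; rcases hlastA with q | q <;> linarith
          · rcases hlastA with q | q <;> linarith
        have hw' : ¬ y (n - 1) < z (n - 1) := fun h => by linarith [hmin (n-1) (by omega) h]
        have := hle (n-1) (by omega)
        rcases hlastA with q | q <;> rcases hzlast with q' | q' <;> linarith
      by_cases hb2 : y n = y (n + 1) + 2
      · refine hmoveNa ?_ (by linarith)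
        rcases mcase with h | h | h | h
        · rcases hlastA with q | q <;> linarith
        · rw [h] at hrel; push_cast at hrel; rcases hlastA with q | q <;> linarith
        · rw [h] at hrel; push_cast at hrel; rcases hlastA with q | q <;> linarith
        · rcases hlastA with q | q <;> linarith
      · refine moveN Hb hmem posb hy hy.2.1 hz.2.1 hle (by simp only [en]; exact a1)
          (by simp only [en]; exact hlt) ?_ ?_ ?_
        · intro s h1 h2 h3
          simp only [en] at h3
          rcases xns_center s h1 h2 with rfl | rfl
          · exact hb1 h3
          · linarith
        · intro s h1 h2 h3
          simp only [en] at h3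
          rcases xns_center s h1 h2 with rfl | rfl
          · exact hb2 h3
          · linarith
        · intro y' h1 h2 h3
          simp only [en] at h3
          refine hGb y' h1 h2 ?_
          rw [h3]
          rcases mcase with h | h | h | h
          · rcases hlastA with q | q <;> linarith
          · rw [h] at hrel; push_cast at hrel
            rcases hlastA with q | q
            · exact absurd (by linarith) hb1
            · linarith
          · rw [h] at hrel; push_cast at hrel
            rcases hlastA with q | q
            · linarith
            · exact absurd (by linarith) hb2
          · rcases hlastA with q | q <;> linarith

theorem stmtBns (n : ℕ) (ε : ℝ) (i : ℕ) (k : ℤ) (hn : 2 ≤ n) (e0 : 0 < ε) (e1 : ε < 1 / 2)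
    (hi : i < n) (hk : k % 2 = 0)
    (p p' : List (ℝ × ℝ)) (hp : p ∈ P (.B n ε) i k) (hp' : p' ∈ P (.B n ε) i k) :
    ∃ ms : List (Bool × (ℕ × ℤ)), MoveSeq (.B n ε) i k p' p ms ∧
      ∀ jl : ℕ × ℤ, ¬((true, jl) ∈ ms ∧ (false, jl) ∈ ms) := by
  have hne : i ≠ n := by omega
  set la : ℤ := k - (2 * (n : ℤ) - 2 * (i : ℤ) - 1) with hla
  set lb : ℤ := k + (2 * (n : ℤ) - 2 * (i : ℤ) - 1) with hlb
  have en : 2 * n + 1 - n = n + 1 := by omega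
  have key0 : ∀ ya yb : ℕ → ℝ, mkP (n + 1) (xsp n la) ya ++ (mkP (n + 1) (xsp n lb) yb).reverse =
      mkP (2 * n + 2) (xns n la lb) (fun r => if r ≤ n then ya r else yb (2 * n + 1 - r)) :=
    fun ya yb => mkP_append n _ _ ya yb
  have hmem : ∀ y, GN n ε la lb y → mkP (2 * n + 2) (xns n la lb) y ∈ pathsB n ε i k := by
    intro y hy
    rw [pathsB, if_neg hne]
    refine ⟨mkP (n + 1) (xsp n la) y, mkP (n + 1) (xsp n lb) (fun r => y (2 * n + 1 - r)),
      spin_mem hn hy.1, spin_mem hn hy.2.1, ?_, ?_, ?_⟩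
    · rw [key0]
      apply mkP_congr
      intro r hr
      by_cases c : r ≤ n
      · simp [c]
      · have : 2 * n + 1 - (2 * n + 1 - r) = r := by omega
        simp [c, this]
    · rw [pt_mkP (by omega), pt_mkP (by omega), xsp_last, xsp_last]
    · rw [pt_mkP (by omega), pt_mkP (by omega)]
      simp only [en]
      linarith [hy.2.2]
  refine generic (.B n ε) i k (posN n la) (2 * n + 2) (xns n la lb) (GN n ε la lb) ?_ ?_ ?_
    p p' hp hp'
  · intro p h
    change p ∈ pathsB n ε i k at h
    rw [pathsB, if_neg hne] at h
    obtain ⟨a, b, h1, h2, rfl, _, h4⟩ := h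
    obtain ⟨a1, a2⟩ := spin_of_mem h1
    obtain ⟨b1, b2⟩ := spin_of_mem h2
    refine ⟨fun r => if r ≤ n then (pt a r).2 else (pt b (2 * n + 1 - r)).2, ⟨?_, ?_, ?_⟩, ?_⟩
    · refine ⟨?_, ?_, ?_⟩
      · have := a1.1
        simp only [Nat.zero_le, if_true]; exact this
      · intro s hs
        have := a1.2.1 s hs
        simpa [show s + 1 ≤ n by omega, show s ≤ n by omega] using this
      · have := a1.2.2
        simpa using this
    · have hh : ∀ t ≤ n, (if 2 * n + 1 - t ≤ n then (pt a (2 * n + 1 - t)).2 else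
          (pt b (2 * n + 1 - (2 * n + 1 - t))).2) = (pt b t).2 := by
        intro t ht
        rw [if_neg (by omega), show 2 * n + 1 - (2 * n + 1 - t) = t by omega]
      refine ⟨?_, ?_, ?_⟩
      · simp only; rw [hh 0 (by omega)]; exact b1.1
      · intro s hs
        simp only; rw [hh s (by omega), hh (s+1) (by omega)]; exact b1.2.1 s hs
      · simp only; rw [hh n (by omega), hh (n-1) (by omega)]; exact b1.2.2
    · have : 2 * n + 1 - (n + 1) = n := by omega
      simp [this]
      linarith
    · have := key0 (fun r => (pt a r).2) (fun r => (pt b r).2)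
      rw [← a2, ← b2] at this
      exact this
  · intro y z hy hz
    refine ⟨Spin_min hn e0 e1 hy.1 hz.1, Spin_min hn e0 e1 hy.2.1 hz.2.1, ?_⟩
    exact min_lt_min hy.2.2 hz.2.2
  · exact keyN n ε i k la lb hn e0 e1 (by omega) (by omega) hmem

/-- any two paths `p, p' ∈ 𝒫_{i,k}` are connected by a finite sequence of
raising and lowering moves at points of `W` containing no inverse pair of moves: no point of
`W` occurs both as the site of a lowering move and as the site of a raising move. -/
theorem stmt5 (S : Setting) (hS : S.valid) (i : ℕ) (k : ℤ) (hik : (i, k) ∈ X S)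
    (p p' : List (ℝ × ℝ)) (hp : p ∈ P S i k) (hp' : p' ∈ P S i k) :
    ∃ ms : List (Bool × (ℕ × ℤ)), MoveSeq S i k p' p ms ∧
      ∀ jl : ℕ × ℤ, ¬((true, jl) ∈ ms ∧ (false, jl) ∈ ms) := by
  cases S with
  | A n => exact stmtA_s5 n i k hik p p' hp hp'
  | B n ε =>
    obtain ⟨hn, e0, e1⟩ := hS
    rcases hik with ⟨h1, h2⟩ | ⟨h1, h2, h3⟩
    · simp only at h1 h2
      subst h1
      exact stmtBspin _ ε k hn e0 e1 h2 p p' hp hp'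
    · exact stmtBns n ε i k hn e0 e1 h2 h3 p p' hp hp'

end Paper
end
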